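/- arXiv:2208.04576 — 2 statements merged into one kernel-verified Lean document; each statement's English description precedes it below -/
import Mathlib

section
/- Fix an integer b ≥ 2 and γ ∈ (0,1), and assume φ : ℝ → ℝ is a ℤ-periodic Lipschitz function satisfying condition (H). Then for every ε > 0 there exists M₁(ε) such that for every m ≥ M₁(ε) there exists K₁(ε,m) such that for every k ≥ K₁(ε,m) there exists N₁(ε,m,k) such that for all n ≥ N₁(ε,m,k): ν^n({ i ∈ Λⁿ : m_{i(0)} is (α, ε, m)-entropy porous from scale 1 to k }) > 1 − ε. -/
/-!
The measures `m_y` are self-affine: iterating `S(x, aj) = φ((x+a)/b) + γ S((x+a)/b, j)` shows that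
`m_y` is the average, over the words `w` of length `n`, of images of `m_{w(y)}` under affine maps
of ratio `γⁿ` (`selfsim`). Entropy porosity follows by comparing two estimates for the averages
over the points `y = i(0)`, `i ∈ Λⁿ`, which are the points `p / bⁿ`, `0 ≤ p < bⁿ` (`card_words`).
Throughout, `m_y` is handled as the law of `S(y, ·)` under the Bernoulli measure `ν`.

*Exact dimensionality on grids.* By bounded convergence on `[0,1] × Σ`, for large `m` the balls of
radius about `b⁻ᵐ` around `S(x,j)` have `m_x`-mass `b ^ (-m (α ± ε'))` outside a set of small
measure (`tendsto_bad`). Since `S(·,j)` is Lipschitz uniformly in `j`, this passes from Lebesgue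
averages to averages over all sufficiently fine grids (`grid_low`, `grid_up`).

*Upper bound for the total entropy.* Not too light balls bound the entropy of `m_y` at level `k + m`
by about `(k + m) α log b`, on average over `y` (`ent_le_of_nbhd`, `avg_ent_le`). The mean
normalized entropies of the components of the levels `1, …, k` telescope, so that their average is
at most this entropy divided by `k log b` (`sum_cent_le`).

*Lower bound for each scale.* At level `N`, write `m_y` as an average of images of the `m_{w(y)}`
with `γⁿ` comparable to `b⁻ᴺ`. Concavity of entropy bounds the entropy of the components of `m_y`
below by those of the pieces. A piece has bounded entropy at level `N`, and its mass on heavy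
intervals of level `N + m` is at most the mass of the centres of heavy balls of radius `γ⁻¹ b⁻ᵐ`
for `m_{w(y)}`. As `y` runs through a grid, the points `w(y)` run through a finer grid
(`grid_refine`), so on average over `y` the amount by which the component entropies fall below `α`
(`deficit`) is small, uniformly in `N` (`deficit_le`, `avg_deficit_le`).

Since the normalized component entropies have mean at most about `α` and fall below `α` by little
on average, they rarely exceed `α + ε` (`porous_ge`, `avg_defect_lt`), and Markov's inequality over
the grid concludes.
-/

open MeasureTheory Set Filter
open scoped ENNReal NNReal Topology

namespace Skew

noncomputable section

variable (b : ℕ) (γ : ℝ) (φ : ℝ → ℝ)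

/-- `j₁ + j₂ b + ⋯ + jₙ b^{n-1}`, the integer part determined by the first `n`
digits of the sequence `j`. -/
def sval (j : ℕ → Fin b) (n : ℕ) : ℕ := ∑ k ∈ Finset.range n, (j k).val * b ^ k

/-- `S(x,j) = Σ_{n≥1} γ^{n-1} φ((x + j₁ + j₂ b + ⋯ + jₙ b^{n-1})/bⁿ)` for an infinite
sequence `j ∈ Σ = Λ^{ℤ₊}`. -/
def S (x : ℝ) (j : ℕ → Fin b) : ℝ :=
  ∑' n : ℕ, γ ^ n * φ ((x + sval b j (n + 1)) / (b : ℝ) ^ (n + 1))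

/-- value of a finite word: first letter has weight `b^0`. -/
def lval : List (Fin b) → ℕ
  | [] => 0
  | a :: w => a.val + b * lval w

/-- `S(x,w)` for a finite word `w ∈ Λ^#`. -/
def Sfin (x : ℝ) (w : List (Fin b)) : ℝ :=
  ∑ n ∈ Finset.range w.length, γ ^ n * φ ((x + lval b (w.take (n + 1))) / (b : ℝ) ^ (n + 1))

/-- concatenation of a finite word with an infinite sequence. -/
def cat (w : List (Fin b)) (j : ℕ → Fin b) : ℕ → Fin b :=
  fun n => if h : n < w.length then w.get ⟨n, h⟩ else j (n - w.length)

/-- `w(x) = (x + w₁ + w₂ b + ⋯ + wₙ b^{n-1})/bⁿ`. -/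
def pt (w : List (Fin b)) (x : ℝ) : ℝ := (x + lval b w) / (b : ℝ) ^ w.length

/-- the `b`-adic interval `I_w = [w(0), w(0) + b^{-|w|})`. -/
def Iword (w : List (Fin b)) : Set ℝ :=
  Ico (pt b w 0) (pt b w 0 + ((b : ℝ) ^ w.length)⁻¹)

/-- value of a word given as a function `Fin n → Fin b`. -/
def fval {n : ℕ} (w : Fin n → Fin b) : ℕ := ∑ k : Fin n, (w k).val * b ^ (k : ℕ)

/-- `w(x)` for a word given as a function `Fin n → Fin b`. -/
def fpt {n : ℕ} (w : Fin n → Fin b) (x : ℝ) : ℝ := (x + fval b w) / (b : ℝ) ^ n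

/-- `ν` is the Bernoulli product measure `ν^{ℤ₊}` of uniform measures on `Λ = Fin b`:
a probability measure giving each cylinder of length `n` measure `b^{-n}`.  (These
conditions determine the measure uniquely.) -/
def IsBernoulli (ν : Measure (ℕ → Fin b)) : Prop :=
  IsProbabilityMeasure ν ∧
    ∀ (n : ℕ) (w : Fin n → Fin b), ν {j | ∀ k : Fin n, j k = w k} = ((b : ℝ≥0∞) ^ n)⁻¹

/-- the measure `m_x`, pushforward of `ν^{ℤ₊}` under `j ↦ S(x,j)`. -/
def mMeas (ν : Measure (ℕ → Fin b)) (x : ℝ) : Measure ℝ := ν.map (S b γ φ x)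

/-- the SRB measure `ω`: pushforward of `Leb|_{[0,1)} × ν^{ℤ₊}` under `(x,j) ↦ (x, S(x,j))`. -/
def srb (ν : Measure (ℕ → Fin b)) : Measure (ℝ × ℝ) :=
  ((volume.restrict (Ico (0 : ℝ) 1)).prod ν).map fun p => (p.1, S b γ φ p.1 p.2)

/-- the attractor `F^φ_{b,γ}`, closure of `{(x, S(x,j)) : x ∈ [0,1), j ∈ Σ}`. -/
def attractor : Set (ℝ × ℝ) :=
  closure {p | ∃ x ∈ Ico (0 : ℝ) 1, ∃ j : ℕ → Fin b, p = (x, S b γ φ x j)}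

/-- condition (H). -/
def CondH : Prop :=
  ∀ i j : ℕ → Fin b, i ≠ j → ∃ x ∈ Icc (0 : ℝ) 1, S b γ φ x i ≠ S b γ φ x j

/-- condition (H*). -/
def CondHstar : Prop :=
  ∀ i j : ℕ → Fin b, ∀ x ∈ Icc (0 : ℝ) 1, S b γ φ x i = S b γ φ x j

/-- a measure is exact dimensional with dimension `β`. -/
def IsExactDim {X : Type*} [MetricSpace X] [MeasurableSpace X] (μ : Measure X) (β : ℝ) : Prop :=
  ∀ᵐ z ∂μ, Tendsto (fun r : ℝ => Real.log (μ (Metric.closedBall z r)).toReal / Real.log r)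
    (nhdsWithin 0 (Ioi 0)) (nhds β)

/-- the `b`-adic interval of level `n` with index `j`. -/
def badicI (n : ℕ) (j : ℤ) : Set ℝ := Ico ((j : ℝ) / (b : ℝ) ^ n) ((j + 1 : ℝ) / (b : ℝ) ^ n)

/-- the entropy `H(μ, L_n)` (in base-`b` logarithm). -/
def entropy (μ : Measure ℝ) (n : ℕ) : ℝ :=
  (∑' j : ℤ, Real.negMulLog (μ (badicI b n j)).toReal) / Real.log b

/-- the `b`-adic interval of level `n` containing `x`. -/
def badicAt (n : ℕ) (x : ℝ) : Set ℝ := badicI b n ⌊x * (b : ℝ) ^ n⌋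

/-- the component measure `μ_{x,n} = μ(· | L_n(x))`. -/
def component (μ : Measure ℝ) (n : ℕ) (x : ℝ) : Measure ℝ :=
  (μ (badicAt b n x))⁻¹ • μ.restrict (badicAt b n x)

/-- `μ` is `(h,δ,m)`-entropy porous from scale `n₁` to `n₂`. -/
def EntPorous (μ : Measure ℝ) (h δ : ℝ) (m n₁ n₂ : ℕ) : Prop :=
  (1 / (n₂ - n₁ + 1 : ℝ)) *
    ∑ i ∈ Finset.Icc n₁ n₂,
      (μ {x | (1 / m : ℝ) * entropy b (component b μ i x) (i + m) < h + δ}).toReal > 1 - δ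

/-! ### The function `S` -/

section Series

variable {b : ℕ} {γ : ℝ} {φ : ℝ → ℝ}

theorem phi_bdd (hper : ∀ x : ℝ, φ (x + 1) = φ x) {K : ℝ≥0} (hlip : LipschitzWith K φ) :
    ∃ M : ℝ, 0 ≤ M ∧ ∀ x, |φ x| ≤ M := by
  refine ⟨|φ 0| + K, by positivity, fun x => ?_⟩
  have hp : Function.Periodic φ 1 := hper
  have h1 : φ (Int.fract x) = φ x := by
    have := hp.sub_zsmul_eq (x := x) ⌊x⌋
    rw [zsmul_one] at this
    exact this
  have h2 := hlip.dist_le_mul (Int.fract x) 0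
  rw [Real.dist_eq, Real.dist_eq, sub_zero, abs_of_nonneg (Int.fract_nonneg x), h1] at h2
  have h3 : (K : ℝ) * Int.fract x ≤ K :=
    mul_le_of_le_one_right K.2 (Int.fract_lt_one x).le
  have h4 := abs_sub_abs_le_abs_sub (φ x) (φ 0)
  linarith

theorem S_summable (hγ : γ ∈ Ioo (0 : ℝ) 1) {M : ℝ} (hM : ∀ x, |φ x| ≤ M) (x : ℝ)
    (j : ℕ → Fin b) :
    Summable fun n : ℕ => γ ^ n * φ ((x + sval b j (n + 1)) / (b : ℝ) ^ (n + 1)) := by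
  refine Summable.of_norm_bounded
    ((summable_geometric_of_lt_one hγ.1.le hγ.2).mul_right M) fun n => ?_
  rw [norm_mul, Real.norm_eq_abs, Real.norm_eq_abs, abs_of_nonneg (pow_nonneg hγ.1.le n)]
  exact mul_le_mul_of_nonneg_left (hM _) (pow_nonneg hγ.1.le n)

theorem S_bdd (hγ : γ ∈ Ioo (0 : ℝ) 1) {M : ℝ} (hM : ∀ x, |φ x| ≤ M) (x : ℝ)
    (j : ℕ → Fin b) : |S b γ φ x j| ≤ (1 - γ)⁻¹ * M := by
  rw [← Real.norm_eq_abs]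
  refine tsum_of_norm_bounded ((hasSum_geometric_of_lt_one hγ.1.le hγ.2).mul_right M)
    fun n => ?_
  rw [norm_mul, Real.norm_eq_abs, Real.norm_eq_abs, abs_of_nonneg (pow_nonneg hγ.1.le n)]
  exact mul_le_mul_of_nonneg_left (hM _) (pow_nonneg hγ.1.le n)

theorem S_lip (hb : 2 ≤ b) (hγ : γ ∈ Ioo (0 : ℝ) 1) {M : ℝ} (hM : ∀ x, |φ x| ≤ M) {K : ℝ≥0}
    (hlip : LipschitzWith K φ) (x y : ℝ) (j : ℕ → Fin b) :
    |S b γ φ x j - S b γ φ y j| ≤ (1 - γ)⁻¹ * (K * |x - y|) := by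
  have hb1 : (1 : ℝ) ≤ b := by exact_mod_cast (by omega : 1 ≤ b)
  unfold S
  rw [← (S_summable hγ hM x j).tsum_sub (S_summable hγ hM y j), ← Real.norm_eq_abs]
  refine tsum_of_norm_bounded
    ((hasSum_geometric_of_lt_one hγ.1.le hγ.2).mul_right (K * |x - y|)) fun n => ?_
  rw [← mul_sub, norm_mul, Real.norm_eq_abs, Real.norm_eq_abs,
    abs_of_nonneg (pow_nonneg hγ.1.le n)]
  refine mul_le_mul_of_nonneg_left ?_ (pow_nonneg hγ.1.le n)
  refine (hlip.dist_le_mul _ _).trans ?_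
  refine mul_le_mul_of_nonneg_left ?_ K.2
  rw [Real.dist_eq, ← sub_div, add_sub_add_right_eq_sub, abs_div]
  refine div_le_self (abs_nonneg _) ?_
  rw [abs_of_nonneg (by positivity)]
  exact one_le_pow₀ hb1

theorem S_cont (hγ : γ ∈ Ioo (0 : ℝ) 1) {M : ℝ} (hM : ∀ x, |φ x| ≤ M) (hφ : Continuous φ) :
    Continuous fun p : ℝ × (ℕ → Fin b) => S b γ φ p.1 p.2 := by
  unfold S
  refine continuous_tsum (u := fun n => γ ^ n * M) (fun n => ?_)
    ((summable_geometric_of_lt_one hγ.1.le hγ.2).mul_right M) fun n p => ?_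
  · have h : Continuous fun p : ℝ × (ℕ → Fin b) => (sval b p.2 (n + 1) : ℝ) := by
      unfold sval
      push_cast
      refine continuous_finsetSum _ fun k _ => Continuous.mul ?_ continuous_const
      exact (continuous_of_discreteTopology (f := fun a : Fin b => ((a : ℕ) : ℝ))).comp
        ((continuous_apply k).comp continuous_snd)
    exact continuous_const.mul (hφ.comp ((continuous_fst.add h).div_const _))
  · rw [norm_mul, Real.norm_eq_abs, Real.norm_eq_abs, abs_of_nonneg (pow_nonneg hγ.1.le n)]
    exact mul_le_mul_of_nonneg_left (hM _) (pow_nonneg hγ.1.le n)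

/-- The sequence `a j₁ j₂ ⋯`. -/
def scons (a : Fin b) (j : ℕ → Fin b) : ℕ → Fin b := fun n => Nat.casesOn n a j

/-- Self-affinity of `S` in its sequence variable, for one letter. -/
theorem S_scons (hb : 2 ≤ b) (hγ : γ ∈ Ioo (0 : ℝ) 1) {M : ℝ} (hM : ∀ x, |φ x| ≤ M) (x : ℝ)
    (a : Fin b) (j : ℕ → Fin b) :
    S b γ φ x (scons a j) =
      φ ((x + (a : ℕ)) / b) + γ * S b γ φ ((x + (a : ℕ)) / b) j := by
  have hb0 : (b : ℝ) ≠ 0 := by positivity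
  rw [S, (S_summable hγ hM x (scons a j)).tsum_eq_zero_add, S, ← tsum_mul_left]
  congr 1
  · simp [sval, scons]
  · refine tsum_congr fun n => ?_
    rw [pow_succ', mul_assoc]
    congr 3
    have : (sval b (scons a j) (n + 1 + 1) : ℝ) = (a : ℕ) + b * sval b j (n + 1) := by
      unfold sval
      rw [Finset.sum_range_succ']
      push_cast
      rw [Finset.mul_sum, add_comm]
      congr 1
      · simp [scons]
      · refine Finset.sum_congr rfl fun k _ => ?_
        simp only [scons]
        ring
    rw [this]
    field_simp
    ring

end Series

/-! ### Self-similarity of the Bernoulli measure and of `m_x` -/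

section Bernoulli

variable {b : ℕ} {γ : ℝ} {φ : ℝ → ℝ}

/-- The cylinder sets, the empty set included. -/
def cyls (b : ℕ) : Set (Set (ℕ → Fin b)) :=
  insert ∅ {s | ∃ (n : ℕ) (w : Fin n → Fin b), s = {j | ∀ k : Fin n, j k = w k}}

theorem isPiSystem_cyls : IsPiSystem (cyls b) := by
  -- Of two cylinders that meet, the one with the longer word is contained in the other.
  have key : ∀ (n : ℕ) (w : Fin n → Fin b) (n' : ℕ) (w' : Fin n' → Fin b), n ≤ n' →
      ({j : ℕ → Fin b | ∀ k : Fin n, j k = w k} ∩ {j | ∀ k : Fin n', j k = w' k}).Nonempty →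
      {j : ℕ → Fin b | ∀ k : Fin n, j k = w k} ∩ {j | ∀ k : Fin n', j k = w' k} =
        {j | ∀ k : Fin n', j k = w' k} := by
    rintro n w n' w' hn ⟨i, hi, hi'⟩
    refine inter_eq_right.2 fun j hj k => ?_
    have h1 := hj ⟨k, k.2.trans_le hn⟩
    have h2 := hi' ⟨k, k.2.trans_le hn⟩
    have h3 := hi k
    simp only at h1 h2
    rw [h1, ← h2, h3]
  rintro s (rfl | ⟨n, w, rfl⟩) t (rfl | ⟨n', w', rfl⟩) hst
  · simp at hst
  · simp at hst
  · simp at hst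
  · rcases le_total n n' with h | h
    · rw [key n w n' w' h hst]
      exact Or.inr ⟨_, _, rfl⟩
    · rw [inter_comm] at hst ⊢
      rw [key n' w' n w h hst]
      exact Or.inr ⟨_, _, rfl⟩

theorem measurableSet_cyl (n : ℕ) (w : Fin n → Fin b) :
    MeasurableSet {j : ℕ → Fin b | ∀ k : Fin n, j k = w k} := by
  rw [ofPred_forall]
  exact MeasurableSet.iInter fun k =>
    measurableSet_eq_fun (measurable_pi_apply _) measurable_const

theorem generateFrom_cyls :
    (MeasurableSpace.pi : MeasurableSpace (ℕ → Fin b)) =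
      MeasurableSpace.generateFrom (cyls b) := by
  apply le_antisymm
  · refine iSup_le fun k => ?_
    rw [← measurable_iff_comap_le]
    refine @measurable_to_countable' _ _ _ _ (MeasurableSpace.generateFrom (cyls b)) _ fun a => ?_
    have : (fun j : ℕ → Fin b => j k) ⁻¹' {a} =
        ⋃ w : {w : Fin (k + 1) → Fin b // w (Fin.last k) = a},
          {j | ∀ i : Fin (k + 1), j i = w.1 i} := by
      ext j
      simp only [mem_preimage, mem_singleton_iff, mem_iUnion, mem_ofPred_eq]
      constructor
      · intro h
        exact ⟨⟨fun i => j i, by simpa using h⟩, fun i => rfl⟩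
      · rintro ⟨w, hw⟩
        have := hw (Fin.last k)
        rw [w.2] at this
        simpa using this
    rw [this]
    exact @MeasurableSet.iUnion _ _ (MeasurableSpace.generateFrom (cyls b)) _ _ fun w =>
      MeasurableSpace.measurableSet_generateFrom (Or.inr ⟨_, _, rfl⟩)
  · refine MeasurableSpace.generateFrom_le ?_
    rintro s (rfl | ⟨n, w, rfl⟩)
    · exact MeasurableSet.empty
    · exact measurableSet_cyl n w

theorem measurable_scons (a : Fin b) : Measurable (scons a : (ℕ → Fin b) → ℕ → Fin b) := by
  refine measurable_pi_lambda _ fun n => ?_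
  cases n with
  | zero => exact measurable_const
  | succ n => exact measurable_pi_apply n

/-- The Bernoulli measure is the average of its images under the maps prefixing a letter. -/
theorem bernoulli_split (hb : 2 ≤ b) {ν : Measure (ℕ → Fin b)} (hν : IsBernoulli b ν) :
    ν = (b : ℝ≥0∞)⁻¹ • ∑ a : Fin b, ν.map (scons a) := by
  have := hν.1
  have hb0 : (b : ℝ≥0∞) ≠ 0 := by
    simp only [ne_eq, Nat.cast_eq_zero]; omega
  have huniv : ν univ = ((b : ℝ≥0∞)⁻¹ • ∑ a : Fin b, ν.map (scons a)) univ := by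
    simp only [Measure.smul_apply, Measure.coe_finsetSum, Finset.sum_apply, smul_eq_mul]
    simp_rw [Measure.map_apply (measurable_scons _) MeasurableSet.univ]
    simp [ENNReal.inv_mul_cancel hb0]
  refine ext_of_generate_finite (cyls b) generateFrom_cyls isPiSystem_cyls ?_ huniv
  rintro s (rfl | ⟨n, w, rfl⟩)
  · simp
  cases n with
  | zero =>
    have : {j : ℕ → Fin b | ∀ k : Fin 0, j k = w k} = univ := by
      ext j; simp
    rw [this]; exact huniv
  | succ n =>
    simp only [Measure.smul_apply, Measure.coe_finsetSum, Finset.sum_apply, smul_eq_mul]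
    simp_rw [Measure.map_apply (measurable_scons _) (measurableSet_cyl _ _)]
    have h1 : ∀ a : Fin b, ν (scons a ⁻¹' {j | ∀ k : Fin (n + 1), j k = w k}) =
        if a = w 0 then ((b : ℝ≥0∞) ^ n)⁻¹ else 0 := by
      intro a
      split_ifs with h
      · rw [← hν.2 n fun k => w k.succ]
        congr 1
        ext j
        simp only [mem_preimage, mem_ofPred_eq, Fin.forall_fin_succ]
        constructor
        · intro hj k
          simpa [scons] using hj.2 k
        · intro hj
          exact ⟨by simpa [scons] using h, fun k => by simpa [scons] using hj k⟩
      · rw [← measure_empty (μ := ν)]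
        congr 1
        ext j
        simp only [mem_preimage, mem_ofPred_eq, mem_empty_iff_false, iff_false]
        intro hj
        exact h (by simpa [scons] using hj 0)
    simp_rw [h1]
    rw [Finset.sum_ite_eq' Finset.univ (w 0), if_pos (Finset.mem_univ _), hν.2, pow_succ',
      ENNReal.mul_inv (Or.inl hb0) (Or.inl (ENNReal.natCast_ne_top b))]

theorem sum_range_mul' (f : ℕ → ℝ) (a N : ℕ) :
    ∑ q ∈ Finset.range (a * N), f q =
      ∑ i ∈ Finset.range a, ∑ p ∈ Finset.range N, f (i * N + p) := by
  induction a with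
  | zero => simp
  | succ a ih => rw [Nat.succ_mul, Finset.sum_range_add, ih, Finset.sum_range_succ]

/-- Self-affinity of `m_x`: it is the average over the words `w` of length `n`, encoded by the
numbers `p < bⁿ`, of affine images with contraction ratio `γⁿ` of the measures `m_{w(x)}`. -/
theorem selfsim (hb : 2 ≤ b) (hγ : γ ∈ Ioo (0 : ℝ) 1) {M : ℝ} (hM : ∀ x, |φ x| ≤ M)
    (hφ : Continuous φ) {ν : Measure (ℕ → Fin b)} (hν : IsBernoulli b ν) (n : ℕ) (y : ℝ) :
    ∃ c : ℕ → ℝ, ∀ B : Set ℝ, MeasurableSet B →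
      ν.real (S b γ φ y ⁻¹' B) = ((b : ℝ) ^ n)⁻¹ * ∑ p ∈ Finset.range (b ^ n),
        ν.real {j | c p + γ ^ n * S b γ φ ((y + p) / (b : ℝ) ^ n) j ∈ B} := by
  have := hν.1
  have hSm : ∀ x, Measurable (S b γ φ x) := fun x =>
    ((S_cont hγ hM hφ).comp (Continuous.prodMk_right x)).measurable
  have hb0 : (b : ℝ) ≠ 0 := by positivity
  have step : ∀ (z : ℝ) (B : Set ℝ), MeasurableSet B → ν.real (S b γ φ z ⁻¹' B) =
      (b : ℝ)⁻¹ * ∑ a ∈ Finset.range b,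
        ν.real {j | φ ((z + a) / b) + γ * S b γ φ ((z + a) / b) j ∈ B} := by
    intro z B hB
    have h := congrArg (fun μ : Measure (ℕ → Fin b) => μ.real (S b γ φ z ⁻¹' B))
      (bernoulli_split hb hν)
    rw [h]
    rw [Finset.sum_range]
    simp only [Measure.real, Measure.smul_apply, Measure.coe_finsetSum, Finset.sum_apply,
      smul_eq_mul, ENNReal.toReal_mul, ENNReal.toReal_inv, ENNReal.toReal_natCast]
    congr 1
    rw [ENNReal.toReal_sum]
    · refine Finset.sum_congr rfl fun a _ => ?_
      rw [Measure.map_apply (measurable_scons a) (hSm z hB)]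
      congr 2
      ext j
      simp only [mem_preimage, mem_ofPred_eq, S_scons hb hγ hM]
    · intro a _
      rw [Measure.map_apply (measurable_scons a) (hSm z hB)]
      exact measure_ne_top _ _
  induction n with
  | zero => exact ⟨fun _ => 0, fun B hB => by simp [preimage]⟩
  | succ n ih =>
    obtain ⟨c, hc⟩ := ih
    -- The word `p + a bⁿ` of length `n + 1` extends the word `p` by the letter `a`.
    refine ⟨fun q => c (q % b ^ n) + γ ^ n * φ ((y + q) / (b : ℝ) ^ (n + 1)), fun B hB => ?_⟩
    rw [hc B hB, pow_succ' b n, sum_range_mul', Finset.sum_comm, pow_succ (b : ℝ) n, mul_inv,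
      mul_assoc]
    congr 1
    rw [Finset.mul_sum]
    refine Finset.sum_congr rfl fun p hp => ?_
    have hm : Measurable fun t : ℝ => c p + γ ^ n * t := by fun_prop
    have h := step ((y + p) / (b : ℝ) ^ n) _ (hm hB)
    refine h.trans ?_
    congr 1
    refine Finset.sum_congr rfl fun a _ => ?_
    have e1 : (a * b ^ n + p) % b ^ n = p := by
      rw [Nat.mul_add_mod_self_right, Nat.mod_eq_of_lt (Finset.mem_range.1 hp)]
    have e2 : ((y + p) / (b : ℝ) ^ n + a) / b =
        (y + (a * b ^ n + p : ℕ)) / (b : ℝ) ^ (n + 1) := by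
      push_cast; field_simp; ring
    have e3 : ((b : ℝ) ^ n * b) = (b : ℝ) ^ (n + 1) := (pow_succ _ _).symm
    beta_reduce
    rw [e2, e1, e3]
    congr 1
    ext j
    simp only [mem_preimage, mem_ofPred_eq]
    rw [mul_add, ← add_assoc, ← mul_assoc, ← pow_succ]

end Bernoulli

/-! ### Distributions on `b`-adic intervals -/

section Adic

variable {b : ℕ} {Ω : Type*} [MeasurableSpace Ω]

theorem mem_badicI (hb : 2 ≤ b) (N : ℕ) (j : ℤ) (x : ℝ) :
    x ∈ badicI b N j ↔ ⌊x * (b : ℝ) ^ N⌋ = j := by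
  have : (0 : ℝ) < (b : ℝ) ^ N := by positivity
  rw [Int.floor_eq_iff, badicI, mem_Ico, div_le_iff₀ this, lt_div_iff₀ this]

theorem measurableSet_badicI (N : ℕ) (j : ℤ) : MeasurableSet (badicI b N j) :=
  measurableSet_Ico

variable (b) in
/-- The probability that `X` lies in the `b`-adic interval of level `N` with index `j`. -/
def pr (ν : Measure Ω) (X : Ω → ℝ) (N : ℕ) (j : ℤ) : ℝ := ν.real (X ⁻¹' badicI b N j)

variable (b) in
/-- The indices of the `b`-adic intervals of level `N` contained in `[-C, C)`. -/
def idx (C N : ℕ) : Finset ℤ := Finset.Ico (-(C * b ^ N : ℤ)) (C * b ^ N)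

variable (b) in
/-- The entropy (natural logarithm) of `X` with respect to the intervals of level `N` contained
in `[-C, C)`. -/
def ent (ν : Measure Ω) (X : Ω → ℝ) (C N : ℕ) : ℝ :=
  ∑ j ∈ idx b C N, Real.negMulLog (pr b ν X N j)

variable (b) in
/-- The entropy (natural logarithm) at level `N + m` of the law of `X` conditioned on the interval
of level `N` with index `i`. -/
def cent (ν : Measure Ω) (X : Ω → ℝ) (N m : ℕ) (i : ℤ) : ℝ :=
  ∑ q ∈ Finset.range (b ^ m),
    Real.negMulLog (pr b ν X (N + m) (i * b ^ m + q) / pr b ν X N i)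

variable {ν : Measure Ω} [IsProbabilityMeasure ν] {X : Ω → ℝ}

omit [IsProbabilityMeasure ν] in
theorem pr_nonneg (N : ℕ) (j : ℤ) : 0 ≤ pr b ν X N j := measureReal_nonneg

theorem pr_le_one (N : ℕ) (j : ℤ) : pr b ν X N j ≤ 1 := measureReal_le_one

theorem sum_pr_eq (hb : 2 ≤ b) (hX : Measurable X) (N : ℕ) (F : Finset ℤ) :
    ∑ a ∈ F, pr b ν X N a = ν.real (⋃ a ∈ F, X ⁻¹' badicI b N a) := by
  unfold pr
  rw [measureReal_biUnion_finset]
  · intro i _ j _ hij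
    refine Set.disjoint_left.2 fun ω hi hj => hij ?_
    rw [mem_preimage, mem_badicI hb] at hi hj
    rw [← hi, ← hj]
  · exact fun a _ => hX (measurableSet_badicI N a)

theorem sum_pr_le (hb : 2 ≤ b) (hX : Measurable X) (N : ℕ) (F : Finset ℤ) (Z : Set Ω)
    (h : ∀ a ∈ F, X ⁻¹' badicI b N a ⊆ Z) : ∑ a ∈ F, pr b ν X N a ≤ ν.real Z := by
  rw [sum_pr_eq hb hX]
  exact measureReal_mono (iUnion₂_subset h)

theorem sum_pr_le_one (hb : 2 ≤ b) (hX : Measurable X) (N : ℕ) (F : Finset ℤ) :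
    ∑ a ∈ F, pr b ν X N a ≤ 1 := by
  rw [sum_pr_eq hb hX]
  exact measureReal_le_one

omit [MeasurableSpace Ω] in
theorem floor_mem_idx (hb : 2 ≤ b) {C : ℕ} {t : ℝ} (ht : |t| < C) (N : ℕ) :
    ⌊t * (b : ℝ) ^ N⌋ ∈ idx b C N := by
  have h0 : (0 : ℝ) < (b : ℝ) ^ N := by positivity
  have h1 := abs_lt.1 ht
  rw [idx, Finset.mem_Ico, Int.le_floor, Int.floor_lt]
  push_cast
  constructor <;> nlinarith

theorem sum_pr_idx (hb : 2 ≤ b) (hX : Measurable X) {C : ℕ} (hC : ∀ ω, |X ω| < C) (N : ℕ) :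
    ∑ a ∈ idx b C N, pr b ν X N a = 1 := by
  rw [sum_pr_eq hb hX]
  have : (⋃ a ∈ idx b C N, X ⁻¹' badicI b N a) = univ := by
    refine eq_univ_of_forall fun ω => ?_
    simp only [mem_iUnion, mem_preimage, mem_badicI hb]
    exact ⟨_, floor_mem_idx hb (hC ω) N, rfl⟩
  rw [this]
  simp

theorem badicI_children (hb : 2 ≤ b) (N m : ℕ) (i : ℤ) (x : ℝ) :
    x ∈ badicI b N i ↔ ∃ q ∈ Finset.range (b ^ m), x ∈ badicI b (N + m) (i * b ^ m + q) := by
  have h0 : (0 : ℝ) < (b : ℝ) ^ m := by positivity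
  simp_rw [mem_badicI hb]
  rw [pow_add, ← mul_assoc]
  set z := x * (b : ℝ) ^ N
  constructor
  · intro h
    rw [Int.floor_eq_iff] at h
    have h1 : i * b ^ m ≤ ⌊z * (b : ℝ) ^ m⌋ := by
      rw [Int.le_floor]; push_cast; nlinarith
    have h2 : ⌊z * (b : ℝ) ^ m⌋ < (i + 1) * b ^ m := by
      rw [Int.floor_lt]; push_cast; nlinarith
    refine ⟨(⌊z * (b : ℝ) ^ m⌋ - i * b ^ m).toNat, ?_, ?_⟩
    · rw [Finset.mem_range, Int.toNat_lt (by linarith)]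
      push_cast
      linarith
    · rw [Int.toNat_of_nonneg (by linarith)]
      ring
  · rintro ⟨q, hq, h⟩
    rw [Finset.mem_range] at hq
    have hq' : (q : ℝ) + 1 ≤ (b : ℝ) ^ m := by exact_mod_cast hq
    rw [Int.floor_eq_iff] at h ⊢
    push_cast at h
    have hq0 : (0 : ℝ) ≤ q := by positivity
    constructor
    · exact le_of_mul_le_mul_right (by linarith) h0
    · refine lt_of_mul_lt_mul_right ?_ h0.le
      linarith

theorem sum_children_pr (hb : 2 ≤ b) (hX : Measurable X) (N m : ℕ) (i : ℤ) :
    ∑ q ∈ Finset.range (b ^ m), pr b ν X (N + m) (i * b ^ m + q) = pr b ν X N i := by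
  have hinj : Function.Injective fun q : ℕ => (i * b ^ m + q : ℤ) := fun p q h => by
    simpa using h
  have h := sum_pr_eq (ν := ν) hb hX (N + m) ((Finset.range (b ^ m)).map ⟨_, hinj⟩)
  rw [Finset.sum_map] at h
  refine h.trans ?_
  unfold pr
  congr 1
  ext ω
  rw [mem_preimage, badicI_children hb N m i]
  simp

theorem pr_child_le (hb : 2 ≤ b) (hX : Measurable X) (N m : ℕ) (i : ℤ) {q : ℕ}
    (hq : q ∈ Finset.range (b ^ m)) :
    pr b ν X (N + m) (i * b ^ m + q) ≤ pr b ν X N i := by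
  rw [← sum_children_pr hb hX N m i]
  exact Finset.single_le_sum (f := fun q : ℕ => pr b ν X (N + m) (i * b ^ m + q))
    (fun q _ => pr_nonneg _ _) hq

omit [MeasurableSpace Ω] in
theorem sum_idx_children (hb : 2 ≤ b) (C N m : ℕ) (f : ℤ → ℝ) :
    ∑ a ∈ idx b C (N + m), f a =
      ∑ i ∈ idx b C N, ∑ q ∈ Finset.range (b ^ m), f (i * b ^ m + q) := by
  have h0 : (0 : ℤ) < (b : ℤ) ^ m := by positivity
  rw [← Finset.sum_product']
  symm
  refine Finset.sum_nbij' (fun p => p.1 * b ^ m + p.2)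
    (fun a => (a / b ^ m, (a % b ^ m).toNat)) ?_ ?_ ?_ ?_ ?_
  · rintro ⟨i, q⟩ h
    simp only [idx, Finset.mem_product, Finset.mem_Ico, Finset.mem_range] at h ⊢
    obtain ⟨⟨h1, h2⟩, h3⟩ := h
    have h3' : (q : ℤ) < (b : ℤ) ^ m := by exact_mod_cast h3
    rw [pow_add]
    constructor
    · nlinarith [Int.natCast_nonneg q]
    · have : i + 1 ≤ C * (b : ℤ) ^ N := h2
      nlinarith
  · intro a h
    simp only [idx, Finset.mem_product, Finset.mem_Ico, Finset.mem_range] at h ⊢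
    rw [pow_add] at h
    refine ⟨⟨?_, ?_⟩, ?_⟩
    · rw [Int.le_ediv_iff_mul_le h0]; linarith
    · rw [Int.ediv_lt_iff_lt_mul h0]; linarith
    · rw [Int.toNat_lt (Int.emod_nonneg _ h0.ne')]
      push_cast
      exact Int.emod_lt_of_pos _ h0
  · rintro ⟨i, q⟩ h
    simp only [Finset.mem_product, Finset.mem_range] at h
    have h3' : (q : ℤ) < (b : ℤ) ^ m := by exact_mod_cast h.2
    have e1 : (i * (b : ℤ) ^ m + q) / b ^ m = i := by
      rw [add_comm, Int.add_mul_ediv_right _ _ h0.ne', Int.ediv_eq_zero_of_lt (by positivity) h3',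
        zero_add]
    have e2 : (i * (b : ℤ) ^ m + q) % b ^ m = q := by
      rw [add_comm, Int.add_mul_emod_self_right, Int.emod_eq_of_lt (by positivity) h3']
    simp [e1, e2]
  · intro a _
    simp only
    rw [Int.toNat_of_nonneg (Int.emod_nonneg _ h0.ne'), mul_comm]
    exact Int.mul_ediv_add_emod _ _
  · intro _ _; rfl

/-- Chain rule for the entropy inside one interval of level `N`. -/
theorem pr_mul_cent (hb : 2 ≤ b) (hX : Measurable X) (N m : ℕ) (i : ℤ) :
    pr b ν X N i * cent b ν X N m i =
      ∑ q ∈ Finset.range (b ^ m), Real.negMulLog (pr b ν X (N + m) (i * b ^ m + q)) -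
        Real.negMulLog (pr b ν X N i) := by
  have hsum := sum_children_pr (ν := ν) hb hX N m i
  rcases (pr_nonneg (b := b) (ν := ν) (X := X) N i).eq_or_lt with h | h
  · have h1 : ∀ q ∈ Finset.range (b ^ m), pr b ν X (N + m) (i * b ^ m + q) = 0 := fun q hq =>
      le_antisymm ((pr_child_le hb hX N m i hq).trans h.ge) (pr_nonneg _ _)
    rw [← h, Finset.sum_congr rfl fun q hq => by rw [h1 q hq]]
    simp
  · unfold cent
    have h2 : ∀ q ∈ Finset.range (b ^ m),
        pr b ν X N i * Real.negMulLog (pr b ν X (N + m) (i * b ^ m + q) / pr b ν X N i) =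
          Real.negMulLog (pr b ν X (N + m) (i * b ^ m + q)) +
            pr b ν X (N + m) (i * b ^ m + q) * Real.log (pr b ν X N i) := by
      intro q _
      rcases (pr_nonneg (b := b) (ν := ν) (X := X) (N + m) (i * b ^ m + q)).eq_or_lt with h' | h'
      · rw [← h']; simp
      · rw [Real.negMulLog, Real.negMulLog, Real.log_div h'.ne' h.ne']
        field_simp
        ring
    rw [Finset.mul_sum, Finset.sum_congr rfl h2, Finset.sum_add_distrib, ← Finset.sum_mul, hsum]
    simp only [Real.negMulLog]
    ring

theorem ent_add (hb : 2 ≤ b) (hX : Measurable X) (C N m : ℕ) :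
    ∑ i ∈ idx b C N, pr b ν X N i * cent b ν X N m i = ent b ν X C (N + m) - ent b ν X C N := by
  unfold ent
  rw [sum_idx_children hb, ← Finset.sum_sub_distrib]
  exact Finset.sum_congr rfl fun i _ => pr_mul_cent hb hX N m i

theorem cent_nonneg (hb : 2 ≤ b) (hX : Measurable X) (N m : ℕ) (i : ℤ) :
    0 ≤ cent b ν X N m i :=
  Finset.sum_nonneg fun _ hq => Real.negMulLog_nonneg
    (div_nonneg (pr_nonneg _ _) (pr_nonneg _ _))
    (div_le_one_of_le₀ (pr_child_le hb hX N m i hq) (pr_nonneg _ _))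

theorem ent_mono (hb : 2 ≤ b) (hX : Measurable X) (C : ℕ) : Monotone (ent b ν X C) := by
  refine monotone_nat_of_le_succ fun N => ?_
  rw [← sub_nonneg, ← ent_add hb hX]
  exact Finset.sum_nonneg fun i _ => mul_nonneg (pr_nonneg _ _) (cent_nonneg hb hX _ _ _)

theorem ent_nonneg (C N : ℕ) : 0 ≤ ent b ν X C N :=
  Finset.sum_nonneg fun _ _ => Real.negMulLog_nonneg (pr_nonneg _ _) (pr_le_one _ _)

/-- The sum over the scales `1, …, k` of the mean entropies of the components telescopes. -/
theorem sum_cent_le (hb : 2 ≤ b) (hX : Measurable X) (C m k : ℕ) :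
    ∑ i ∈ Finset.range k, (ent b ν X C (i + 1 + m) - ent b ν X C (i + 1)) ≤
      m * ent b ν X C (k + m) := by
  have h : ∀ l ≤ m, ∑ i ∈ Finset.range k, (ent b ν X C (i + 1 + l) - ent b ν X C (i + 1)) ≤
      l * ent b ν X C (k + m) := by
    intro l
    induction l with
    | zero => intro _; simp
    | succ l ih =>
      intro hl
      have h1 := ih (by omega)
      have h2 : ∑ i ∈ Finset.range k, (ent b ν X C (i + 1 + (l + 1)) - ent b ν X C (i + 1 + l)) =
          ent b ν X C (k + (l + 1)) - ent b ν X C (0 + (l + 1)) := by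
        rw [← Finset.sum_range_sub (fun i => ent b ν X C (i + (l + 1))) k]
        refine Finset.sum_congr rfl fun i _ => ?_
        congr 2; ring
      have h3 := ent_mono (ν := ν) hb hX C (show k + (l + 1) ≤ k + m by omega)
      have h4 := ent_nonneg (b := b) (ν := ν) (X := X) C (0 + (l + 1))
      have h5 : ∑ i ∈ Finset.range k, (ent b ν X C (i + 1 + (l + 1)) - ent b ν X C (i + 1)) =
          ∑ i ∈ Finset.range k, (ent b ν X C (i + 1 + (l + 1)) - ent b ν X C (i + 1 + l)) +
          ∑ i ∈ Finset.range k, (ent b ν X C (i + 1 + l) - ent b ν X C (i + 1)) := by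
        rw [← Finset.sum_add_distrib]
        exact Finset.sum_congr rfl fun i _ => by ring
      rw [h5, h2]
      push_cast
      linarith
  exact h m le_rfl

omit [IsProbabilityMeasure ν] in
/-- The entropy of a component of the law of `X`. -/
theorem entropy_component (hb : 2 ≤ b) (hX : Measurable X) (N m : ℕ) (x : ℝ) :
    entropy b (component b (ν.map X) N x) (N + m) =
      cent b ν X N m ⌊x * (b : ℝ) ^ N⌋ / Real.log b := by
  unfold entropy cent
  congr 1
  set i := ⌊x * (b : ℝ) ^ N⌋ with hi
  have hval : ∀ j : ℤ, (component b (ν.map X) N x (badicI b (N + m) j)).toReal =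
      ν.real (X ⁻¹' (badicI b (N + m) j ∩ badicI b N i)) / pr b ν X N i := by
    intro j
    rw [component, badicAt, ← hi, Measure.smul_apply,
      Measure.restrict_apply (measurableSet_badicI _ _),
      Measure.map_apply hX (measurableSet_badicI _ _),
      Measure.map_apply hX ((measurableSet_badicI _ _).inter (measurableSet_badicI _ _)),
      smul_eq_mul, ENNReal.toReal_mul, ENNReal.toReal_inv, inv_mul_eq_div]
    rfl
  have hinj : Function.Injective fun q : ℕ => (i * b ^ m + q : ℤ) := fun p q h => by
    simpa using h
  rw [tsum_eq_sum (s := (Finset.range (b ^ m)).map ⟨_, hinj⟩), Finset.sum_map]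
  · refine Finset.sum_congr rfl fun q hq => ?_
    rw [hval, inter_eq_left.2]
    · rfl
    · intro z hz
      exact (badicI_children hb N m i z).2 ⟨q, hq, hz⟩
  · intro j hj
    have : badicI b (N + m) j ∩ badicI b N i = ∅ := by
      refine eq_empty_of_forall_notMem fun z hz => hj ?_
      obtain ⟨q, hq, h⟩ := (badicI_children hb N m i z).1 hz.2
      rw [Finset.mem_map]
      refine ⟨q, hq, ?_⟩
      rw [mem_badicI hb] at h
      rw [← (mem_badicI hb _ _ _).1 hz.1, h]
      rfl
    rw [hval, this]
    simp

end Adic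

/-! ### Entropy estimates -/

section Estimates

variable {b : ℕ} {Ω : Type*} [MeasurableSpace Ω] {ν : Measure Ω} [IsProbabilityMeasure ν]
  {X : Ω → ℝ}

/-- Gibbs' inequality, for one term. -/
theorem negMulLog_le {p q : ℝ} (hp : 0 ≤ p) (hq : 0 < q) :
    Real.negMulLog p ≤ p * (-Real.log q) + q := by
  rcases hp.eq_or_lt with rfl | hp
  · simpa using hq.le
  · have h := Real.log_le_sub_one_of_pos (div_pos hq hp)
    rw [Real.log_div hq.ne' hp.ne'] at h
    have h1 : p * (Real.log q - Real.log p) ≤ p * (q / p - 1) := mul_le_mul_of_nonneg_left h hp.le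
    have h2 : p * (q / p - 1) = q - p := by field_simp
    rw [Real.negMulLog]
    linarith

theorem ent_le_of_range (hb : 2 ≤ b) (hX : Measurable X) (C N : ℕ) (F : Finset ℤ)
    (hF : ∀ ω, ⌊X ω * (b : ℝ) ^ N⌋ ∈ F) : ent b ν X C N ≤ Real.log F.card + 1 := by
  obtain ⟨ω₀⟩ : Nonempty Ω := ν.nonempty_of_neZero
  have hpos : (0 : ℝ) < F.card := by exact_mod_cast Finset.card_pos.2 ⟨_, hF ω₀⟩
  have h1 : ent b ν X C N ≤ ∑ a ∈ F, Real.negMulLog (pr b ν X N a) := by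
    unfold ent
    rw [← Finset.sum_filter_of_ne (p := fun a => a ∈ F) (fun a _ ha => ?_)]
    · refine Finset.sum_le_sum_of_subset_of_nonneg
        (fun a ha => (Finset.mem_filter.1 ha).2)
        fun a _ _ => Real.negMulLog_nonneg (pr_nonneg _ _) (pr_le_one _ _)
    by_contra hn
    refine ha ?_
    have : X ⁻¹' badicI b N a = ∅ := by
      refine eq_empty_of_forall_notMem fun ω hω => hn ?_
      rw [mem_preimage, mem_badicI hb] at hω
      exact hω ▸ hF ω
    simp [pr, this]
  refine h1.trans ?_
  have h2 : ∑ a ∈ F, Real.negMulLog (pr b ν X N a) ≤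
      ∑ a ∈ F, (pr b ν X N a * (-Real.log (F.card : ℝ)⁻¹) + (F.card : ℝ)⁻¹) :=
    Finset.sum_le_sum fun a _ => negMulLog_le (pr_nonneg _ _) (inv_pos.2 hpos)
  refine h2.trans ?_
  rw [Finset.sum_add_distrib, ← Finset.sum_mul, Finset.sum_const, nsmul_eq_mul,
    mul_inv_cancel₀ hpos.ne', Real.log_inv, neg_neg]
  have h3 := sum_pr_le_one (ν := ν) hb hX N F
  have h4 : 0 ≤ Real.log (F.card : ℝ) := Real.log_natCast_nonneg _
  nlinarith

/-- If all atoms outside a set of probability `u` have a neighbourhood of mass at least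
`exp (-θ)`, then the entropy is at most about `θ + u * log (b ^ k)`.  It is obtained by comparing
the law of `X` with the average of the uniform law and of the law of `X` smeared over neighbouring
intervals. -/
theorem ent_le_of_nbhd (hb : 2 ≤ b) (hX : Measurable X) {C : ℕ} (hC0 : 0 < C)
    (k : ℕ) {θ u : ℝ} (hθ : 0 ≤ θ)
    (hu : ∀ F : Finset ℤ, (∀ a ∈ F, ∑ d ∈ Finset.range 3, pr b ν X k (a + d - 1) <
      Real.exp (-θ)) → ∑ a ∈ F, pr b ν X k a ≤ u) :
    ent b ν X C k ≤ Real.log 6 + 1 + θ + u * Real.log (2 * (2 * C * (b : ℝ) ^ k)) := by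
  set nb : ℤ → ℝ := fun a => ∑ d ∈ Finset.range 3, pr b ν X k (a + d - 1) with hnb
  set T : ℝ := 2 * (2 * C * (b : ℝ) ^ k) with hT
  have hC1 : (1 : ℝ) ≤ C := by exact_mod_cast hC0
  have hb1 : (1 : ℝ) ≤ b := by exact_mod_cast (by omega : 1 ≤ b)
  have hT1 : 1 ≤ T := by
    have := one_le_pow₀ hb1 (n := k)
    nlinarith
  have hlT : 0 ≤ Real.log T := Real.log_nonneg hT1
  have hnb0 : ∀ a, 0 ≤ nb a := fun a => Finset.sum_nonneg fun _ _ => pr_nonneg _ _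
  have hcard : ((idx b C k).card : ℝ) = T / 2 := by
    have h : (idx b C k).card = 2 * C * b ^ k := by
      rw [idx, Int.card_Ico]
      have : (C * b ^ k - -(C * b ^ k) : ℤ) = (2 * C * b ^ k : ℕ) := by push_cast; ring
      rw [this, Int.toNat_natCast]
    rw [h, hT]; push_cast; ring
  have hq : ∀ a, 0 < 1 / T + nb a / 6 := fun a => by
    have := hnb0 a
    positivity
  have hqsum : ∑ a ∈ idx b C k, (1 / T + nb a / 6) ≤ 1 := by
    rw [Finset.sum_add_distrib, Finset.sum_const, nsmul_eq_mul, hcard, ← Finset.sum_div]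
    have h1 : ∑ a ∈ idx b C k, nb a ≤ 3 := by
      rw [hnb, Finset.sum_comm]
      have h2 : ∀ d ∈ Finset.range 3, ∑ a ∈ idx b C k, pr b ν X k (a + d - 1) ≤ 1 := by
        intro d _
        have hinj : Function.Injective fun a : ℤ => a + (d : ℤ) - 1 := fun x y h => by
          simpa using h
        have := sum_pr_le_one (ν := ν) hb hX k ((idx b C k).map ⟨_, hinj⟩)
        rwa [Finset.sum_map] at this
      refine (Finset.sum_le_sum h2).trans ?_
      simp
    have h3 : T / 2 * (1 / T) = 1 / 2 := by field_simp
    rw [h3]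
    linarith
  have hterm : ∀ a ∈ idx b C k, Real.negMulLog (pr b ν X k a) ≤
      pr b ν X k a * (Real.log 6 + θ) +
        (if nb a < Real.exp (-θ) then pr b ν X k a else 0) * Real.log T +
        (1 / T + nb a / 6) := by
    intro a _
    refine (negMulLog_le (pr_nonneg _ _) (hq a)).trans ?_
    have hp := pr_nonneg (b := b) (ν := ν) (X := X) k a
    gcongr ?_ + _
    split_ifs with hbad
    · have h1 : -Real.log (1 / T + nb a / 6) ≤ Real.log T := by
        rw [neg_le, ← Real.log_inv, ← one_div]
        refine Real.log_le_log (by positivity) ?_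
        linarith [hnb0 a]
      have h2 : 0 ≤ Real.log 6 := Real.log_nonneg (by norm_num)
      have h3 := mul_le_mul_of_nonneg_left h1 hp
      have h4 : 0 ≤ pr b ν X k a * (Real.log 6 + θ) := mul_nonneg hp (by linarith)
      linarith
    · rw [not_lt] at hbad
      have h1 : -Real.log (1 / T + nb a / 6) ≤ Real.log 6 + θ := by
        have h2 : Real.exp (-θ) / 6 ≤ 1 / T + nb a / 6 := by
          have : 0 ≤ 1 / T := by positivity
          linarith
        have h3 := Real.log_le_log (by positivity) h2
        rw [Real.log_div (Real.exp_pos _).ne' (by norm_num), Real.log_exp] at h3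
        linarith
      have h3 := mul_le_mul_of_nonneg_left h1 hp
      linarith
  refine (Finset.sum_le_sum hterm).trans ?_
  rw [Finset.sum_add_distrib, Finset.sum_add_distrib, ← Finset.sum_mul, ← Finset.sum_mul,
    ← Finset.sum_filter]
  have h1 := hu ((idx b C k).filter fun a => nb a < Real.exp (-θ))
    fun a ha => (Finset.mem_filter.1 ha).2
  have h2 := sum_pr_le_one (ν := ν) hb hX k (idx b C k)
  have h3 : 0 ≤ Real.log 6 := Real.log_nonneg (by norm_num)
  have h4 := mul_le_mul_of_nonneg_right h1 hlT
  have h5 := mul_le_mul_of_nonneg_right h2 (by linarith : 0 ≤ Real.log 6 + θ)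
  linarith

/-- Concavity of the entropy of components: `X` is distributed as a uniform mixture of the
variables `Y p`. -/
theorem pr_mul_cent_ge (hb : 2 ≤ b) {n : ℕ} (hn : 0 < n)
    {Y : ℕ → Ω → ℝ} (hY : ∀ p, Measurable (Y p))
    (hmix : ∀ N j, pr b ν X N j = (n : ℝ)⁻¹ * ∑ p ∈ Finset.range n, pr b ν (Y p) N j)
    (N m : ℕ) (i : ℤ) :
    (n : ℝ)⁻¹ * ∑ p ∈ Finset.range n, pr b ν (Y p) N i * cent b ν (Y p) N m i ≤
      pr b ν X N i * cent b ν X N m i := by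
  have hn' : (0 : ℝ) < n := by exact_mod_cast hn
  unfold cent
  simp_rw [Finset.mul_sum]
  rw [Finset.sum_comm]
  refine Finset.sum_le_sum fun q hq => ?_
  rcases (pr_nonneg (b := b) (ν := ν) (X := X) N i).eq_or_lt with h | h
  · have h1 : ∑ p ∈ Finset.range n, pr b ν (Y p) N i = 0 := by
      have := hmix N i
      rw [← h] at this
      rcases mul_eq_zero.1 this.symm with h2 | h2
      · exact absurd h2 (inv_pos.2 hn').ne'
      · exact h2
    have h2 := (Finset.sum_eq_zero_iff_of_nonneg fun p _ => pr_nonneg N i).1 h1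
    rw [← h, zero_mul]
    refine (Finset.sum_eq_zero fun p hp => ?_).le
    rw [h2 p hp]; simp
  · have hcc := Real.concaveOn_negMulLog.le_map_sum (t := Finset.range n)
      (w := fun p => (n : ℝ)⁻¹ * pr b ν (Y p) N i / pr b ν X N i)
      (p := fun p => pr b ν (Y p) (N + m) (i * b ^ m + q) / pr b ν (Y p) N i)
      (fun p _ => div_nonneg (mul_nonneg (inv_pos.2 hn').le (pr_nonneg _ _)) h.le)
      (by rw [← Finset.sum_div, ← Finset.mul_sum, ← hmix, div_self h.ne'])
      (fun p _ => mem_Ici.2 (div_nonneg (pr_nonneg _ _) (pr_nonneg _ _)))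
    have e : ∑ p ∈ Finset.range n, ((n : ℝ)⁻¹ * pr b ν (Y p) N i / pr b ν X N i) •
        (pr b ν (Y p) (N + m) (i * b ^ m + q) / pr b ν (Y p) N i) =
        pr b ν X (N + m) (i * b ^ m + q) / pr b ν X N i := by
      rw [hmix (N + m), Finset.mul_sum, Finset.sum_div]
      refine Finset.sum_congr rfl fun p _ => ?_
      rcases (pr_nonneg (b := b) (ν := ν) (X := Y p) N i).eq_or_lt with h' | h'
      · have h1 := pr_child_le (ν := ν) hb (hY p) N m i hq
        have h2 : pr b ν (Y p) (N + m) (i * b ^ m + q) = 0 :=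
          le_antisymm (h1.trans h'.ge) (pr_nonneg _ _)
        rw [h2]; simp
      · rw [smul_eq_mul]; field_simp
    rw [e] at hcc
    refine le_trans (le_of_eq ?_) (mul_le_mul_of_nonneg_left hcc h.le)
    rw [Finset.mul_sum]
    refine Finset.sum_congr rfl fun p _ => ?_
    rw [smul_eq_mul]; field_simp

/-- Lower bound, up to an error whose sum over the intervals is controlled, for the entropies of
the components of a variable `Y` whose atoms of level `N + m` mostly have mass at most
`exp (-θ)`. -/
theorem pr_mul_cent_ge_of_small (hb : 2 ≤ b) (hY : Measurable X) (N m : ℕ) (θ : ℝ) (i : ℤ) :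
    θ * pr b ν X N i - θ * ∑ q ∈ Finset.range (b ^ m),
        (if Real.exp (-θ) < pr b ν X (N + m) (i * b ^ m + q) then
          pr b ν X (N + m) (i * b ^ m + q) else 0) - Real.negMulLog (pr b ν X N i) ≤
      pr b ν X N i * cent b ν X N m i := by
  rw [pr_mul_cent hb hY]
  gcongr ?_ - _
  rw [← sum_children_pr (ν := ν) hb hY N m i, Finset.mul_sum, Finset.mul_sum,
    ← Finset.sum_sub_distrib]
  refine Finset.sum_le_sum fun q _ => ?_
  have hp := pr_nonneg (b := b) (ν := ν) (X := X) (N + m) (i * b ^ m + q)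
  have hp1 := pr_le_one (b := b) (ν := ν) (X := X) (N + m) (i * b ^ m + q)
  split_ifs with h
  · rw [sub_self]
    exact Real.negMulLog_nonneg hp hp1
  · rw [mul_zero, sub_zero]
    rcases hp.eq_or_lt with h0 | h0
    · rw [← h0]; simp
    · have := Real.log_le_log h0 (not_lt.1 h)
      rw [Real.log_exp] at this
      rw [Real.negMulLog]
      nlinarith

variable (b) in
/-- Mean amount by which the normalized entropies of the components of level `N` fall short
of `α`. -/
def deficit (ν : Measure Ω) (X : Ω → ℝ) (C N m : ℕ) (α : ℝ) : ℝ :=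
  ∑ i ∈ idx b C N,
    max 0 (α * pr b ν X N i - pr b ν X N i * cent b ν X N m i / (m * Real.log b))

/-- If `X` is a uniform mixture of variables `Y p` of bounded entropy at level `N`, and `Y p` puts
mass at most `u p` on the intervals of level `N + m` heavier than `b ^ (-m (α - ε'))`, then the
deficit of `X` is about the mean of the `u p` at most, up to an error of order `1 / m`. -/
theorem deficit_le (hb : 2 ≤ b) {n : ℕ} (hn : 0 < n)
    {Y : ℕ → Ω → ℝ} (hY : ∀ p, Measurable (Y p))
    (hmix : ∀ N j, pr b ν X N j = (n : ℝ)⁻¹ * ∑ p ∈ Finset.range n, pr b ν (Y p) N j)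
    (C N : ℕ) {m : ℕ} (hm : 0 < m) {α ε' Q : ℝ} (hα : α ≤ 1) (hε : 0 < ε') {u : ℕ → ℝ}
    (hQ : ∀ p, ent b ν (Y p) C N ≤ Q)
    (hu : ∀ p, ∀ F : Finset ℤ,
      (∀ a ∈ F, Real.exp (-(m * (α - ε') * Real.log b)) < pr b ν (Y p) (N + m) a) →
        ∑ a ∈ F, pr b ν (Y p) (N + m) a ≤ u p) :
    deficit b ν X C N m α ≤
      ε' + (n : ℝ)⁻¹ * ∑ p ∈ Finset.range n, u p + Q / (m * Real.log b) := by
  have hn' : (0 : ℝ) < n := by exact_mod_cast hn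
  have hm' : (0 : ℝ) < m := by exact_mod_cast hm
  have hlb : 0 < Real.log b := Real.log_pos (by exact_mod_cast (by omega : 1 < b))
  have hml : 0 < m * Real.log b := mul_pos hm' hlb
  set θ := m * (α - ε') * Real.log b with hθ
  set bad : ℕ → ℤ → ℝ := fun p a =>
    if Real.exp (-θ) < pr b ν (Y p) (N + m) a then pr b ν (Y p) (N + m) a else 0 with hbad
  have hbad0 : ∀ p a, 0 ≤ bad p a := fun p a => by
    rw [hbad]; dsimp only; split_ifs
    · exact pr_nonneg _ _
    · exact le_rfl
  set R : ℕ → ℤ → ℝ := fun p i => ε' * pr b ν (Y p) N i +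
    ∑ q ∈ Finset.range (b ^ m), bad p (i * b ^ m + q) +
    Real.negMulLog (pr b ν (Y p) N i) / (m * Real.log b) with hR
  have hR0 : ∀ p i, 0 ≤ R p i := fun p i => by
    have h1 := pr_nonneg (b := b) (ν := ν) (X := Y p) N i
    have h2 := Real.negMulLog_nonneg h1 (pr_le_one (ν := ν) N i)
    have h3 : 0 ≤ ∑ q ∈ Finset.range (b ^ m), bad p (i * b ^ m + q) :=
      Finset.sum_nonneg fun _ _ => hbad0 _ _
    have h4 := div_nonneg h2 hml.le
    have h5 := mul_nonneg hε.le h1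
    simp only [hR]
    linarith
  have hpiece : ∀ p i, α * pr b ν (Y p) N i -
      pr b ν (Y p) N i * cent b ν (Y p) N m i / (m * Real.log b) ≤ R p i := by
    intro p i
    have h1 := pr_mul_cent_ge_of_small (ν := ν) hb (hY p) N m θ i
    have h2 := div_le_div_of_nonneg_right h1 hml.le
    have h3 : (θ * pr b ν (Y p) N i - θ * ∑ q ∈ Finset.range (b ^ m), bad p (i * b ^ m + q) -
        Real.negMulLog (pr b ν (Y p) N i)) / (m * Real.log b) =
        (α - ε') * pr b ν (Y p) N i - (α - ε') * ∑ q ∈ Finset.range (b ^ m),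
          bad p (i * b ^ m + q) - Real.negMulLog (pr b ν (Y p) N i) / (m * Real.log b) := by
      rw [hθ]; field_simp
    rw [h3] at h2
    have h4 : 0 ≤ ∑ q ∈ Finset.range (b ^ m), bad p (i * b ^ m + q) :=
      Finset.sum_nonneg fun _ _ => hbad0 _ _
    have h5 : (α - ε') * ∑ q ∈ Finset.range (b ^ m), bad p (i * b ^ m + q) ≤
        1 * ∑ q ∈ Finset.range (b ^ m), bad p (i * b ^ m + q) :=
      mul_le_mul_of_nonneg_right (by linarith) h4
    simp only [hR]
    linarith
  have hsum : ∀ p, ∑ i ∈ idx b C N, R p i ≤ ε' + u p + Q / (m * Real.log b) := by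
    intro p
    simp only [hR]
    rw [Finset.sum_add_distrib, Finset.sum_add_distrib, ← Finset.mul_sum, ← Finset.sum_div,
      ← sum_idx_children hb C N m (bad p)]
    have h1 := mul_le_mul_of_nonneg_left (sum_pr_le_one (ν := ν) hb (hY p) N (idx b C N)) hε.le
    have h2 := div_le_div_of_nonneg_right (hQ p) hml.le
    have h3 : ∑ a ∈ idx b C (N + m), bad p a ≤ u p := by
      simp only [hbad]
      rw [← Finset.sum_filter]
      exact hu p _ fun a ha => (Finset.mem_filter.1 ha).2
    unfold ent at h2
    linarith
  have hi : ∀ i ∈ idx b C N,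
      max 0 (α * pr b ν X N i - pr b ν X N i * cent b ν X N m i / (m * Real.log b)) ≤
        (n : ℝ)⁻¹ * ∑ p ∈ Finset.range n, R p i := by
    intro i _
    refine max_le (mul_nonneg (inv_pos.2 hn').le (Finset.sum_nonneg fun p _ => hR0 p i)) ?_
    have h1 := div_le_div_of_nonneg_right
      (pr_mul_cent_ge (ν := ν) hb hn hY hmix N m i) hml.le
    have h2 : (n : ℝ)⁻¹ * ∑ p ∈ Finset.range n, (α * pr b ν (Y p) N i -
        pr b ν (Y p) N i * cent b ν (Y p) N m i / (m * Real.log b)) =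
        α * pr b ν X N i - (n : ℝ)⁻¹ * (∑ p ∈ Finset.range n,
          pr b ν (Y p) N i * cent b ν (Y p) N m i) / (m * Real.log b) := by
      rw [Finset.sum_sub_distrib, ← Finset.mul_sum, ← Finset.sum_div, hmix N i]
      ring
    have h3 : (n : ℝ)⁻¹ * ∑ p ∈ Finset.range n, (α * pr b ν (Y p) N i -
        pr b ν (Y p) N i * cent b ν (Y p) N m i / (m * Real.log b)) ≤
        (n : ℝ)⁻¹ * ∑ p ∈ Finset.range n, R p i :=
      mul_le_mul_of_nonneg_left (Finset.sum_le_sum fun p _ => hpiece p i) (inv_pos.2 hn').le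
    linarith
  refine (Finset.sum_le_sum hi).trans ?_
  rw [← Finset.mul_sum, Finset.sum_comm]
  have h1 : (n : ℝ)⁻¹ * ∑ p ∈ Finset.range n, ∑ i ∈ idx b C N, R p i ≤
      (n : ℝ)⁻¹ * ∑ p ∈ Finset.range n, (ε' + u p + Q / (m * Real.log b)) :=
    mul_le_mul_of_nonneg_left (Finset.sum_le_sum fun p _ => hsum p) (inv_pos.2 hn').le
  refine h1.trans (le_of_eq ?_)
  rw [Finset.sum_add_distrib, Finset.sum_add_distrib, Finset.sum_const, Finset.sum_const,
    Finset.card_range, nsmul_eq_mul, nsmul_eq_mul]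
  field_simp

/-- Markov's inequality for the amount, negative part removed by adding the deficit, by which the
normalized entropies of the components of level `N` exceed `α`. -/
theorem porous_ge (hb : 2 ≤ b) (hX : Measurable X) {C : ℕ} (hC : ∀ ω, |X ω| < C) (N : ℕ) {m : ℕ}
    (hm : 0 < m) (α : ℝ) {ε : ℝ} (hε : 0 < ε) :
    1 - ε⁻¹ * ((ent b ν X C (N + m) - ent b ν X C N) / (m * Real.log b) - α +
        deficit b ν X C N m α) ≤
      ((ν.map X) {x | (1 / m : ℝ) * entropy b (component b (ν.map X) N x) (N + m) <
        α + ε}).toReal := by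
  have hm' : (0 : ℝ) < m := by exact_mod_cast hm
  have hlb : 0 < Real.log b := Real.log_pos (by exact_mod_cast (by omega : 1 < b))
  have hml : 0 < m * Real.log b := mul_pos hm' hlb
  set A := {x | (1 / m : ℝ) * entropy b (component b (ν.map X) N x) (N + m) < α + ε} with hA
  set F := (idx b C N).filter fun i => α + ε ≤ cent b ν X N m i / (m * Real.log b) with hF
  have hprob : IsProbabilityMeasure (ν.map X) := Measure.isProbabilityMeasure_map hX.aemeasurable
  have hmap : ∀ B, MeasurableSet B → (ν.map X).real B = ν.real (X ⁻¹' B) := fun B hB => by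
    rw [Measure.real, Measure.map_apply hX hB, Measure.real]
  have hout : (ν.map X).real {x : ℝ | ¬ |x| < C} = 0 := by
    have hms : MeasurableSet {x : ℝ | ¬ |x| < C} :=
      (measurableSet_lt measurable_id.abs measurable_const).compl
    rw [hmap _ hms]
    have : X ⁻¹' {x : ℝ | ¬ |x| < C} = ∅ :=
      eq_empty_of_forall_notMem fun ω hω => hω (hC ω)
    rw [this]; simp
  have hcover : univ ⊆ A ∪ ((⋃ i ∈ F, badicI b N i) ∪ {x : ℝ | ¬ |x| < C}) := by
    intro x _
    by_cases hx : |x| < C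
    · by_cases hxA : x ∈ A
      · exact Or.inl hxA
      · refine Or.inr (Or.inl ?_)
        simp only [mem_iUnion]
        refine ⟨⌊x * (b : ℝ) ^ N⌋, ?_, (mem_badicI hb _ _ _).2 rfl⟩
        rw [hF, Finset.mem_filter]
        refine ⟨floor_mem_idx hb hx N, ?_⟩
        rw [hA, mem_ofPred_eq, not_lt, entropy_component hb hX] at hxA
        refine hxA.trans (le_of_eq ?_)
        field_simp
    · exact Or.inr (Or.inr hx)
  have h1 : (1 : ℝ) ≤ (ν.map X).real A + ∑ i ∈ F, pr b ν X N i := by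
    have h2 : (ν.map X).real univ ≤ _ := measureReal_mono hcover
    have h3 := measureReal_union_le (μ := ν.map X) A
      ((⋃ i ∈ F, badicI b N i) ∪ {x : ℝ | ¬ |x| < C})
    have h4 := measureReal_union_le (μ := ν.map X) (⋃ i ∈ F, badicI b N i) {x : ℝ | ¬ |x| < C}
    have h5 := measureReal_biUnion_finset_le (μ := ν.map X) F fun i => badicI b N i
    have h6 : ∑ i ∈ F, (ν.map X).real (badicI b N i) = ∑ i ∈ F, pr b ν X N i :=
      Finset.sum_congr rfl fun i _ => hmap _ (measurableSet_badicI N i)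
    rw [probReal_univ] at h2
    linarith
  have h2 : ∑ i ∈ F, pr b ν X N i ≤ ε⁻¹ * ((ent b ν X C (N + m) - ent b ν X C N) /
      (m * Real.log b) - α + deficit b ν X C N m α) := by
    have h3 : (ent b ν X C (N + m) - ent b ν X C N) / (m * Real.log b) - α +
        deficit b ν X C N m α =
        ∑ i ∈ idx b C N, max 0 (pr b ν X N i * cent b ν X N m i / (m * Real.log b) -
          α * pr b ν X N i) := by
      rw [← ent_add hb hX, Finset.sum_div]
      have h4 : α = ∑ i ∈ idx b C N, α * pr b ν X N i := by
        rw [← Finset.mul_sum, sum_pr_idx hb hX hC, mul_one]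
      conv_lhs => enter [1, 2]; rw [h4]
      rw [deficit, ← Finset.sum_sub_distrib, ← Finset.sum_add_distrib]
      refine Finset.sum_congr rfl fun i _ => ?_
      rcases le_total (α * pr b ν X N i)
        (pr b ν X N i * cent b ν X N m i / (m * Real.log b)) with h | h
      · rw [max_eq_left (by linarith), max_eq_right (by linarith)]; ring
      · rw [max_eq_right (by linarith), max_eq_left (by linarith)]; ring
    rw [h3, le_inv_mul_iff₀ hε, Finset.mul_sum]
    refine (Finset.sum_le_sum fun i hi => ?_).trans
      (Finset.sum_le_sum_of_subset_of_nonneg (Finset.filter_subset _ _)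
        fun i _ _ => le_max_left _ _)
    refine le_max_of_le_right ?_
    have h5 := mul_le_mul_of_nonneg_left (Finset.mem_filter.1 hi).2
      (pr_nonneg (b := b) (ν := ν) (X := X) N i)
    rw [mul_div_assoc]
    linarith
  rw [← Measure.real]
  linarith

end Estimates

/-! ### Masses of balls and averages over `b`-adic grids -/

section Balls

variable {b : ℕ} {γ : ℝ} {φ : ℝ → ℝ} {ν : Measure (ℕ → Fin b)}

variable (b γ φ) in
/-- The `m_y`-mass of the closed ball of radius `r` centred at `S(y,j)`. -/
def ballMass (ν : Measure (ℕ → Fin b)) (y : ℝ) (j : ℕ → Fin b) (r : ℝ) : ℝ :=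
  ν.real {j' | |S b γ φ y j' - S b γ φ y j| ≤ r}

variable (b γ φ) in
/-- The pairs `(x,j)` for which the mass of the ball of radius `R b⁻ᵐ` around `S(x,j)` is between
`b ^ (-m (α + ε'))` and `b ^ (-m (α - ε'))`. -/
def good (ν : Measure (ℕ → Fin b)) (R α ε' : ℝ) (m : ℕ) : Set (ℝ × (ℕ → Fin b)) :=
  {p | Real.exp (-(m * (α + ε') * Real.log b)) ≤
      ballMass b γ φ ν p.1 p.2 (R * ((b : ℝ) ^ m)⁻¹) ∧
    ballMass b γ φ ν p.1 p.2 (R * ((b : ℝ) ^ m)⁻¹) ≤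
      Real.exp (-(m * (α - ε') * Real.log b))}

theorem measurable_ballMass [IsProbabilityMeasure ν]
    (hS : Continuous fun p : ℝ × (ℕ → Fin b) => S b γ φ p.1 p.2) (r : ℝ) :
    Measurable fun p : ℝ × (ℕ → Fin b) => ballMass b γ φ ν p.1 p.2 r := by
  have h1 : Measurable fun q : (ℝ × (ℕ → Fin b)) × (ℕ → Fin b) =>
      |S b γ φ q.1.1 q.2 - S b γ φ q.1.1 q.1.2| := by
    have h2 := hS.measurable
    have h3 : Measurable fun q : (ℝ × (ℕ → Fin b)) × (ℕ → Fin b) => S b γ φ q.1.1 q.2 :=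
      h2.comp (measurable_fst.fst.prodMk measurable_snd)
    have h4 : Measurable fun q : (ℝ × (ℕ → Fin b)) × (ℕ → Fin b) => S b γ φ q.1.1 q.1.2 :=
      h2.comp measurable_fst
    exact (h3.sub h4).abs
  exact (measurable_measure_prodMk_left (ν := ν)
    (measurableSet_le h1 (measurable_const (a := r)))).ennreal_toReal

theorem measurableSet_good [IsProbabilityMeasure ν]
    (hS : Continuous fun p : ℝ × (ℕ → Fin b) => S b γ φ p.1 p.2) (R α ε' : ℝ) (m : ℕ) :
    MeasurableSet (good b γ φ ν R α ε' m) :=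
  (measurableSet_le measurable_const (measurable_ballMass hS _)).inter
    (measurableSet_le (measurable_ballMass hS _) measurable_const)

/-- Exact dimensionality at a single point, along the radii `R b⁻ᵐ`. -/
theorem eventually_good (hb : 2 ≤ b) {f : ℝ → ℝ} {α R ε' : ℝ} (hR : 0 < R) (hε : 0 < ε')
    (hpos : ∀ r, 0 < r → 0 < f r)
    (hf : Tendsto (fun r : ℝ => Real.log (f r) / Real.log r) (𝓝[>] 0) (𝓝 α)) :
    ∀ᶠ m : ℕ in atTop, Real.exp (-(m * (α + ε') * Real.log b)) ≤ f (R * ((b : ℝ) ^ m)⁻¹) ∧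
      f (R * ((b : ℝ) ^ m)⁻¹) ≤ Real.exp (-(m * (α - ε') * Real.log b)) := by
  have hb1 : (1 : ℝ) < b := by exact_mod_cast (by omega : 1 < b)
  have hlb : 0 < Real.log b := Real.log_pos hb1
  have hr0 : ∀ m : ℕ, 0 < R * ((b : ℝ) ^ m)⁻¹ := fun m => by positivity
  have hr : Tendsto (fun m : ℕ => R * ((b : ℝ) ^ m)⁻¹) atTop (𝓝 0) := by
    have := (tendsto_inv_atTop_zero.comp (tendsto_pow_atTop_atTop_of_one_lt hb1)).const_mul R
    simpa using this
  have hr' : Tendsto (fun m : ℕ => R * ((b : ℝ) ^ m)⁻¹) atTop (𝓝[>] 0) :=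
    tendsto_nhdsWithin_iff.2 ⟨hr, Eventually.of_forall hr0⟩
  have hlog : ∀ m : ℕ, Real.log (R * ((b : ℝ) ^ m)⁻¹) = Real.log R - m * Real.log b := by
    intro m
    rw [Real.log_mul hR.ne' (by positivity), Real.log_inv, Real.log_pow]
    ring
  have h1 : Tendsto (fun m : ℕ => Real.log (R * ((b : ℝ) ^ m)⁻¹) / m) atTop
      (𝓝 (-Real.log b)) := by
    have h2 : Tendsto (fun m : ℕ => Real.log R / (m : ℝ) - Real.log b) atTop
        (𝓝 (0 - Real.log b)) :=
      (tendsto_const_div_atTop_nhds_zero_nat _).sub_const _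
    rw [zero_sub] at h2
    refine h2.congr' ?_
    filter_upwards [eventually_gt_atTop 0] with m hm
    have hm' : (0 : ℝ) < m := by exact_mod_cast hm
    rw [hlog]
    field_simp
  have h2 := (hf.comp hr').mul h1
  have h3 : ∀ᶠ m : ℕ in atTop, Real.log (f (R * ((b : ℝ) ^ m)⁻¹)) / m ∈
      Ioo (α * -Real.log b - ε' * Real.log b) (α * -Real.log b + ε' * Real.log b) := by
    have h4 := h2.eventually (Ioo_mem_nhds
      (show α * -Real.log b - ε' * Real.log b < α * -Real.log b by nlinarith)
      (show α * -Real.log b < α * -Real.log b + ε' * Real.log b by nlinarith))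
    have h5 := hr.eventually (gt_mem_nhds (show (0 : ℝ) < 1 by norm_num))
    filter_upwards [h4, h5] with m hm hm1
    have hne : Real.log (R * ((b : ℝ) ^ m)⁻¹) ≠ 0 := (Real.log_neg (hr0 m) hm1).ne
    have e : Real.log (f (R * ((b : ℝ) ^ m)⁻¹)) / Real.log (R * ((b : ℝ) ^ m)⁻¹) *
        (Real.log (R * ((b : ℝ) ^ m)⁻¹) / m) = Real.log (f (R * ((b : ℝ) ^ m)⁻¹)) / m :=
      div_mul_div_cancel₀ hne
    simp only [Function.comp] at hm
    rwa [e] at hm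
  filter_upwards [h3, eventually_gt_atTop 0] with m hm hm0
  have hm' : (0 : ℝ) < m := by exact_mod_cast hm0
  rw [mem_Ioo, lt_div_iff₀ hm', div_lt_iff₀ hm'] at hm
  have hfp := hpos _ (hr0 m)
  rw [← Real.le_log_iff_exp_le hfp, ← Real.log_le_iff_le_exp hfp]
  constructor <;> nlinarith

theorem tendsto_bad [IsProbabilityMeasure ν] (hb : 2 ≤ b)
    (hS : Continuous fun p : ℝ × (ℕ → Fin b) => S b γ φ p.1 p.2) {α : ℝ}
    (hα : ∀ᵐ x ∂(volume.restrict (Icc (0 : ℝ) 1)), IsExactDim (mMeas b γ φ ν x) α)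
    {R ε' : ℝ} (hR : 0 < R) (hε : 0 < ε') :
    Tendsto (fun m => ((volume.restrict (Icc (0 : ℝ) 1)).prod ν) (good b γ φ ν R α ε' m)ᶜ)
      atTop (𝓝 0) := by
  have hSm : ∀ x, Measurable (S b γ φ x) := fun x =>
    (hS.comp (Continuous.prodMk_right x)).measurable
  have hmeas : ∀ m, MeasurableSet (good b γ φ ν R α ε' m)ᶜ := fun m =>
    (measurableSet_good hS R α ε' m).compl
  have hev : MeasurableSet {p | ∀ᶠ m in atTop, p ∉ (good b γ φ ν R α ε' m)ᶜ} := by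
    have : {p | ∀ᶠ m in atTop, p ∉ (good b γ φ ν R α ε' m)ᶜ} =
        ⋃ M : ℕ, ⋂ m ≥ M, good b γ φ ν R α ε' m := by
      ext p
      simp [eventually_atTop]
    rw [this]
    exact MeasurableSet.iUnion fun M => MeasurableSet.iInter fun m =>
      MeasurableSet.iInter fun _ => measurableSet_good hS R α ε' m
  have hae : ∀ᵐ p ∂((volume.restrict (Icc (0 : ℝ) 1)).prod ν),
      ∀ᶠ m in atTop, p ∉ (good b γ φ ν R α ε' m)ᶜ := by
    rw [Measure.ae_prod_iff_ae_ae hev]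
    filter_upwards [hα] with x hx
    have hball : ∀ (j : ℕ → Fin b) (r : ℝ),
        (mMeas b γ φ ν x (Metric.closedBall (S b γ φ x j) r)).toReal =
          ballMass b γ φ ν x j r := by
      intro j r
      rw [mMeas, Measure.map_apply (hSm x) measurableSet_closedBall]
      rfl
    -- Almost every point lies in the support of `m_x`; elsewhere `log 0 = 0` would make the
    -- limit in the definition of exact dimensionality meaningless.
    have hsupp : ∀ᵐ z ∂(mMeas b γ φ ν x), ∀ n : ℕ,
        mMeas b γ φ ν x (Metric.closedBall z (1 / ((n : ℝ) + 1))) ≠ 0 := by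
      rw [ae_all_iff]
      intro n
      rw [ae_iff]
      refine measure_null_of_locally_null _ fun z hz => ?_
      simp only [not_not, mem_ofPred_eq] at hz
      exact ⟨_, mem_nhdsWithin_of_mem_nhds (Metric.closedBall_mem_nhds z (by positivity)), hz⟩
    have h1 := ae_of_ae_map (hSm x).aemeasurable hx
    have h2 := ae_of_ae_map (hSm x).aemeasurable hsupp
    filter_upwards [h1, h2] with j hj hj2
    simp_rw [hball] at hj
    have hprob : IsProbabilityMeasure (mMeas b γ φ ν x) :=
      Measure.isProbabilityMeasure_map (hSm x).aemeasurable
    have hpos : ∀ r, 0 < r → 0 < ballMass b γ φ ν x j r := by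
      intro r hr
      obtain ⟨n, hn⟩ := exists_nat_one_div_lt hr
      rw [← hball]
      refine ENNReal.toReal_pos (fun h0 => hj2 n ?_) (measure_ne_top _ _)
      exact measure_mono_null (Metric.closedBall_subset_closedBall hn.le) h0
    filter_upwards [eventually_good hb hR hε hpos hj] with m hm
    exact fun h => h hm
  have := tendsto_measure_of_ae_tendsto_indicator_of_isFiniteMeasure atTop
    (A := ∅) (As := fun m => (good b γ φ ν R α ε' m)ᶜ)
    (μ := (volume.restrict (Icc (0 : ℝ) 1)).prod ν) MeasurableSet.empty hmeas
    (by
      filter_upwards [hae] with p hp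
      filter_upwards [hp] with m hm
      simpa using hm)
  simpa using this

/-- Comparison of an average over the grid `{p / bᴺ}` with an integral. -/
theorem grid_le_integral (hb : 2 ≤ b) (N : ℕ) {U V : ℝ → ℝ} (hU : Measurable U)
    (hU0 : ∀ x, 0 ≤ U x) (hU1 : ∀ x, U x ≤ 1)
    (h : ∀ x y, |x - y| ≤ ((b : ℝ) ^ N)⁻¹ → V y ≤ U x) :
    ((b : ℝ) ^ N)⁻¹ * ∑ p ∈ Finset.range (b ^ N), V (p / (b : ℝ) ^ N) ≤ ∫ x in 0..1, U x := by
  have hb0 : (0 : ℝ) < (b : ℝ) ^ N := by positivity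
  have hInt : ∀ s t : ℝ, IntervalIntegrable U volume s t := fun s t => by
    refine (intervalIntegrable_const (c := (1 : ℝ))).mono_fun hU.aestronglyMeasurable ?_
    refine Eventually.of_forall fun x => ?_
    simpa [abs_of_nonneg (hU0 x)] using hU1 x
  have h1 := intervalIntegral.sum_integral_adjacent_intervals (f := U) (μ := volume)
    (a := fun p : ℕ => (p : ℝ) / (b : ℝ) ^ N) (n := b ^ N) fun k _ => hInt _ _
  have e0 : ((0 : ℕ) : ℝ) / (b : ℝ) ^ N = 0 := by simp
  have e1 : ((b ^ N : ℕ) : ℝ) / (b : ℝ) ^ N = 1 := by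
    push_cast; exact div_self hb0.ne'
  simp only [e0, e1] at h1
  rw [← h1, Finset.mul_sum]
  refine Finset.sum_le_sum fun p _ => ?_
  have hlen : ((p + 1 : ℕ) : ℝ) / (b : ℝ) ^ N - (p : ℝ) / (b : ℝ) ^ N = ((b : ℝ) ^ N)⁻¹ := by
    push_cast; field_simp; ring
  have hle : (p : ℝ) / (b : ℝ) ^ N ≤ ((p + 1 : ℕ) : ℝ) / (b : ℝ) ^ N := by
    have := inv_pos.2 hb0
    linarith
  have h2 := intervalIntegral.integral_mono_on (μ := volume) hle
    (intervalIntegrable_const (c := V (p / (b : ℝ) ^ N))) (hInt _ _) fun x hx => by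
      refine h x _ ?_
      rw [abs_of_nonneg (by linarith [hx.1])]
      linarith [hx.2]
  rw [intervalIntegral.integral_const, hlen, smul_eq_mul] at h2
  exact h2

/-- Averages over fine grids of functions dominated by the proportion of bad sequences at every
nearby point. -/
theorem grid_bad [IsProbabilityMeasure ν] (hb : 2 ≤ b)
    (hS : Continuous fun p : ℝ × (ℕ → Fin b) => S b γ φ p.1 p.2) {α : ℝ}
    (hα : ∀ᵐ x ∂(volume.restrict (Icc (0 : ℝ) 1)), IsExactDim (mMeas b γ φ ν x) α)
    {R ε' δ : ℝ} (hR : 0 < R) (hε : 0 < ε') (hδ : 0 < δ) :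
    ∃ M : ℕ, ∀ m ≥ M, ∀ (N : ℕ) (V : ℝ → ℝ),
      (∀ x y, |x - y| ≤ ((b : ℝ) ^ N)⁻¹ →
        V y ≤ ν.real {j | (x, j) ∉ good b γ φ ν R α ε' m}) →
      ((b : ℝ) ^ N)⁻¹ * ∑ p ∈ Finset.range (b ^ N), V (p / (b : ℝ) ^ N) ≤ δ := by
  have h := (tendsto_bad hb hS hα hR hε).eventually
    (gt_mem_nhds (show (0 : ℝ≥0∞) < ENNReal.ofReal δ by simpa using hδ))
  obtain ⟨M, hM⟩ := eventually_atTop.1 h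
  refine ⟨M, fun m hm N V hV => ?_⟩
  have hms := (measurableSet_good (ν := ν) hS R α ε' m).compl
  have hmeas : Measurable fun x => ν (Prod.mk x ⁻¹' (good b γ φ ν R α ε' m)ᶜ) :=
    measurable_measure_prodMk_left hms
  have h1 := grid_le_integral hb N (U := fun x => ν.real {j | (x, j) ∉ good b γ φ ν R α ε' m})
    (V := V) hmeas.ennreal_toReal (fun _ => measureReal_nonneg) (fun _ => measureReal_le_one) hV
  refine h1.trans ?_
  have h2 := hM m hm
  rw [Measure.prod_apply hms] at h2
  rw [intervalIntegral.integral_of_le zero_le_one, ← integral_Icc_eq_integral_Ioc]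
  have h3 := integral_toReal (μ := volume.restrict (Icc (0 : ℝ) 1)) hmeas.aemeasurable
    (Eventually.of_forall fun x => measure_lt_top _ _)
  refine le_trans (le_of_eq h3) ?_
  exact ENNReal.toReal_le_of_le_ofReal hδ.le h2.le

theorem ballMass_le [IsProbabilityMeasure ν] {L : ℝ}
    (hL : ∀ x y j, |S b γ φ x j - S b γ φ y j| ≤ L * |x - y|) {x y r s : ℝ}
    (h : r + 2 * (L * |x - y|) ≤ s) (j : ℕ → Fin b) :
    ballMass b γ φ ν y j r ≤ ballMass b γ φ ν x j s := by
  refine measureReal_mono fun j' hj' => ?_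
  rw [mem_ofPred_eq] at hj' ⊢
  have h1 := abs_le.1 (hL x y j')
  have h2 := abs_le.1 (hL x y j)
  have h3 := abs_le.1 hj'
  rw [abs_le]
  constructor <;> linarith

theorem exists_grid_fine (hb : 2 ≤ b) (L : ℝ) {s : ℝ} (hs : 0 < s) :
    ∃ N₀ : ℕ, ∀ N ≥ N₀, ∀ x y : ℝ, |x - y| ≤ ((b : ℝ) ^ N)⁻¹ → 2 * (L * |x - y|) ≤ s := by
  have hb1 : (1 : ℝ) < b := by exact_mod_cast (by omega : 1 < b)
  have h1 : Tendsto (fun N : ℕ => 2 * |L| * ((b : ℝ) ^ N)⁻¹) atTop (𝓝 0) := by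
    have := (tendsto_inv_atTop_zero.comp (tendsto_pow_atTop_atTop_of_one_lt hb1)).const_mul
      (2 * |L|)
    simpa using this
  obtain ⟨N₀, hN⟩ := eventually_atTop.1 (h1.eventually (gt_mem_nhds hs))
  refine ⟨N₀, fun N hN' x y hxy => ?_⟩
  have h2 := hN N hN'
  have h3 : L * |x - y| ≤ |L| * ((b : ℝ) ^ N)⁻¹ :=
    mul_le_mul (le_abs_self L) hxy (abs_nonneg _) (abs_nonneg _)
  linarith

/-- On fine grids, most balls of radius `R b⁻ᵐ` are not too heavy. -/
theorem grid_low [IsProbabilityMeasure ν] (hb : 2 ≤ b)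
    (hS : Continuous fun p : ℝ × (ℕ → Fin b) => S b γ φ p.1 p.2) {α : ℝ}
    (hα : ∀ᵐ x ∂(volume.restrict (Icc (0 : ℝ) 1)), IsExactDim (mMeas b γ φ ν x) α)
    {L : ℝ} (hL : ∀ x y j, |S b γ φ x j - S b γ φ y j| ≤ L * |x - y|)
    {R ε' δ : ℝ} (hR : 0 < R) (hε : 0 < ε') (hδ : 0 < δ) :
    ∃ M : ℕ, ∀ m ≥ M, ∃ N₀ : ℕ, ∀ N ≥ N₀,
      ((b : ℝ) ^ N)⁻¹ * ∑ p ∈ Finset.range (b ^ N),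
        ν.real {j | Real.exp (-(m * (α - ε') * Real.log b)) <
          ballMass b γ φ ν (p / (b : ℝ) ^ N) j (R * ((b : ℝ) ^ m)⁻¹)} ≤ δ := by
  obtain ⟨M, hM⟩ := grid_bad (ν := ν) hb hS hα (R := R + 1) (by linarith) hε hδ
  refine ⟨M, fun m hm => ?_⟩
  obtain ⟨N₀, hN₀⟩ := exists_grid_fine hb L (s := ((b : ℝ) ^ m)⁻¹) (by positivity)
  refine ⟨N₀, fun N hN => hM m hm N (fun y => ν.real {j |
    Real.exp (-(m * (α - ε') * Real.log b)) <
      ballMass b γ φ ν y j (R * ((b : ℝ) ^ m)⁻¹)}) fun x y hxy => ?_⟩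
  refine measureReal_mono fun j hj hg => ?_
  have h1 := ballMass_le (ν := ν) hL (x := x) (y := y) (r := R * ((b : ℝ) ^ m)⁻¹)
    (s := (R + 1) * ((b : ℝ) ^ m)⁻¹) (by linarith [hN₀ N hN x y hxy]) j
  exact absurd (hj.trans_le (h1.trans hg.2)) (lt_irrefl _)

/-- On fine grids, most balls of radius `b⁻ᵐ` are not too light. -/
theorem grid_up [IsProbabilityMeasure ν] (hb : 2 ≤ b)
    (hS : Continuous fun p : ℝ × (ℕ → Fin b) => S b γ φ p.1 p.2) {α : ℝ}
    (hα : ∀ᵐ x ∂(volume.restrict (Icc (0 : ℝ) 1)), IsExactDim (mMeas b γ φ ν x) α)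
    {L : ℝ} (hL : ∀ x y j, |S b γ φ x j - S b γ φ y j| ≤ L * |x - y|)
    {ε' δ : ℝ} (hε : 0 < ε') (hδ : 0 < δ) :
    ∃ M : ℕ, ∀ m ≥ M, ∃ N₀ : ℕ, ∀ N ≥ N₀,
      ((b : ℝ) ^ N)⁻¹ * ∑ p ∈ Finset.range (b ^ N),
        ν.real {j | ballMass b γ φ ν (p / (b : ℝ) ^ N) j ((b : ℝ) ^ m)⁻¹ <
          Real.exp (-(m * (α + ε') * Real.log b))} ≤ δ := by
  obtain ⟨M, hM⟩ := grid_bad (ν := ν) hb hS hα (R := 1 / 2) (by norm_num) hε hδ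
  refine ⟨M, fun m hm => ?_⟩
  obtain ⟨N₀, hN₀⟩ := exists_grid_fine hb L (s := 1 / 2 * ((b : ℝ) ^ m)⁻¹) (by positivity)
  refine ⟨N₀, fun N hN => hM m hm N (fun y => ν.real {j |
    ballMass b γ φ ν y j ((b : ℝ) ^ m)⁻¹ < Real.exp (-(m * (α + ε') * Real.log b))})
    fun x y hxy => ?_⟩
  refine measureReal_mono fun j hj hg => ?_
  have h1 := ballMass_le (ν := ν) hL (x := y) (y := x) (r := 1 / 2 * ((b : ℝ) ^ m)⁻¹)
    (s := ((b : ℝ) ^ m)⁻¹) (by rw [abs_sub_comm]; linarith [hN₀ N hN x y hxy]) j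
  exact absurd ((hg.1.trans h1).trans_lt hj) (lt_irrefl _)

end Balls

/-! ### From balls to partitions -/

section Bridge

variable {b : ℕ} {γ : ℝ} {φ : ℝ → ℝ} {ν : Measure (ℕ → Fin b)} [IsProbabilityMeasure ν]

/-- Intervals of level `k` that are light together with their two neighbours carry no more mass
than the centres of light balls of radius `b⁻ᵏ`. -/
theorem sum_light_le (hb : 2 ≤ b) {y : ℝ} (hX : Measurable (S b γ φ y)) (k : ℕ) (t : ℝ)
    (F : Finset ℤ)
    (hF : ∀ a ∈ F, ∑ d ∈ Finset.range 3, pr b ν (S b γ φ y) k (a + d - 1) < t) :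
    ∑ a ∈ F, pr b ν (S b γ φ y) k a ≤
      ν.real {j | ballMass b γ φ ν y j ((b : ℝ) ^ k)⁻¹ < t} := by
  have h0 : (0 : ℝ) < (b : ℝ) ^ k := by positivity
  refine sum_pr_le hb hX k F _ fun a ha j hj => lt_of_le_of_lt ?_ (hF a ha)
  rw [mem_preimage, mem_badicI hb] at hj
  refine le_trans (measureReal_mono (s₂ := ⋃ d ∈ Finset.range 3,
    S b γ φ y ⁻¹' badicI b k (a + d - 1)) (fun j' hj' => ?_) (measure_ne_top _ _))
    (measureReal_biUnion_finset_le _ _)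
  rw [mem_ofPred_eq] at hj'
  have h1 : |S b γ φ y j' * (b : ℝ) ^ k - S b γ φ y j * (b : ℝ) ^ k| ≤ 1 := by
    rw [← sub_mul, abs_mul, abs_of_pos h0]
    calc _ ≤ ((b : ℝ) ^ k)⁻¹ * (b : ℝ) ^ k := mul_le_mul_of_nonneg_right hj' h0.le
      _ = 1 := inv_mul_cancel₀ h0.ne'
  have h2 := abs_le.1 h1
  have h3 := Int.floor_eq_iff.1 hj
  have h4 : a - 1 ≤ ⌊S b γ φ y j' * (b : ℝ) ^ k⌋ := by
    rw [Int.le_floor]; push_cast; linarith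
  have h5 : ⌊S b γ φ y j' * (b : ℝ) ^ k⌋ < a + 2 := by
    rw [Int.floor_lt]; push_cast; linarith
  simp only [mem_iUnion, mem_preimage, mem_badicI hb, Finset.mem_range]
  exact ⟨(⌊S b γ φ y j' * (b : ℝ) ^ k⌋ - a + 1).toNat, by omega, by omega⟩

/-- Heavy intervals of level `N + m` for an affine image of `m_z` of size comparable to `b⁻ᴺ`
carry no more mass than the centres of heavy balls of radius `γ⁻¹ b⁻ᵐ` for `m_z`. -/
theorem sum_heavy_le (hb : 2 ≤ b) (hγ : 0 < γ) {z : ℝ} (hX : Measurable (S b γ φ z)) (c : ℝ)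
    {n N : ℕ} (m : ℕ) (hn : γ * ((b : ℝ) ^ N)⁻¹ ≤ γ ^ n) (t : ℝ) (F : Finset ℤ)
    (hF : ∀ a ∈ F, t < pr b ν (fun j => c + γ ^ n * S b γ φ z j) (N + m) a) :
    ∑ a ∈ F, pr b ν (fun j => c + γ ^ n * S b γ φ z j) (N + m) a ≤
      ν.real {j | t < ballMass b γ φ ν z j (γ⁻¹ * ((b : ℝ) ^ m)⁻¹)} := by
  have hbN : (0 : ℝ) < (b : ℝ) ^ N := by positivity
  have hbm : (0 : ℝ) < (b : ℝ) ^ m := by positivity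
  have hγn : 0 < γ ^ n := pow_pos hγ n
  refine sum_pr_le hb ((hX.const_mul _).const_add _) _ F _ fun a ha j hj => (hF a ha).trans_le ?_
  refine measureReal_mono fun j' hj' => ?_
  rw [mem_preimage, badicI, mem_Ico] at hj hj'
  have h1 : |γ ^ n * (S b γ φ z j' - S b γ φ z j)| ≤ ((b : ℝ) ^ N)⁻¹ * ((b : ℝ) ^ m)⁻¹ := by
    have e : ((a + 1 : ℝ)) / (b : ℝ) ^ (N + m) - a / (b : ℝ) ^ (N + m) =
        ((b : ℝ) ^ N)⁻¹ * ((b : ℝ) ^ m)⁻¹ := by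
      rw [← sub_div, pow_add, ← mul_inv]
      simp
    rw [abs_le]
    constructor <;> nlinarith [hj.1, hj.2, hj'.1, hj'.2]
  rw [abs_mul, abs_of_pos hγn] at h1
  have h2 := (mul_le_mul_of_nonneg_right hn (abs_nonneg (S b γ φ z j' - S b γ φ z j))).trans h1
  rw [mul_comm γ, mul_assoc] at h2
  have h3 := le_of_mul_le_mul_left h2 (inv_pos.2 hbN)
  rw [mem_ofPred_eq, inv_mul_eq_div, le_div_iff₀ hγ, mul_comm]
  exact h3

/-- An affine image of a bounded variable at scale `b⁻ᴺ` has bounded entropy at level `N`. -/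
theorem ent_affine_le (hb : 2 ≤ b) {y : ℝ} (hX : Measurable (S b γ φ y)) {C : ℕ}
    (hC : ∀ j, |S b γ φ y j| < C) (c : ℝ) {s : ℝ} {N : ℕ} (hs0 : 0 ≤ s)
    (hs : s ≤ ((b : ℝ) ^ N)⁻¹) :
    ent b ν (fun j => c + s * S b γ φ y j) C N ≤ Real.log (2 * C + 1) + 1 := by
  have hbN : (0 : ℝ) < (b : ℝ) ^ N := by positivity
  have h := ent_le_of_range (ν := ν) hb ((hX.const_mul s).const_add c) C N
    (Finset.Icc (⌊c * (b : ℝ) ^ N⌋ - C) (⌊c * (b : ℝ) ^ N⌋ + C)) fun j => by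
      have h1 : s * (b : ℝ) ^ N ≤ 1 := by
        calc _ ≤ ((b : ℝ) ^ N)⁻¹ * (b : ℝ) ^ N := mul_le_mul_of_nonneg_right hs hbN.le
          _ = 1 := inv_mul_cancel₀ hbN.ne'
      have h2 : |s * S b γ φ y j * (b : ℝ) ^ N| ≤ C := by
        rw [mul_right_comm, abs_mul, abs_of_nonneg (by positivity : 0 ≤ s * (b : ℝ) ^ N)]
        calc _ ≤ 1 * |S b γ φ y j| := mul_le_mul_of_nonneg_right h1 (abs_nonneg _)
          _ ≤ C := by rw [one_mul]; exact (hC j).le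
      have h3 := abs_le.1 h2
      rw [Finset.mem_Icc, ← Int.floor_sub_natCast, ← Int.floor_add_natCast, add_mul]
      exact ⟨Int.floor_le_floor (by linarith), Int.floor_le_floor (by linarith)⟩
  have e : ((Finset.Icc (⌊c * (b : ℝ) ^ N⌋ - C) (⌊c * (b : ℝ) ^ N⌋ + C)).card : ℝ) = 2 * C + 1 := by
    rw [Int.card_Icc]
    have : (⌊c * (b : ℝ) ^ N⌋ + C + 1 - (⌊c * (b : ℝ) ^ N⌋ - C)).toNat = 2 * C + 1 := by omega
    rw [this]; push_cast; ring
  rwa [e] at h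

/-- At each scale `N` the deficit of `m_y` is controlled by the heavy balls of the measures
`m_{w(y)}`, `w` ranging over the words of a length `n` with `γⁿ` comparable to `b⁻ᴺ`. -/
theorem deficit_S_le (hb : 2 ≤ b) (hγ : γ ∈ Ioo (0 : ℝ) 1) {M : ℝ} (hM : ∀ x, |φ x| ≤ M)
    (hφ : Continuous φ) (hν : IsBernoulli b ν) {C : ℕ} (hC : ∀ y j, |S b γ φ y j| < C)
    (N : ℕ) {m : ℕ} (hm : 0 < m) {α ε' : ℝ} (hα : α ≤ 1) (hε : 0 < ε') :
    ∃ n : ℕ, ∀ y, deficit b ν (S b γ φ y) C N m α ≤ ε' +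
      ((b : ℝ) ^ n)⁻¹ * ∑ p ∈ Finset.range (b ^ n),
        ν.real {j | Real.exp (-(m * (α - ε') * Real.log b)) <
          ballMass b γ φ ν ((y + p) / (b : ℝ) ^ n) j (γ⁻¹ * ((b : ℝ) ^ m)⁻¹)} +
      (Real.log (2 * C + 1) + 1) / (m * Real.log b) := by
  have hSm : ∀ x, Measurable (S b γ φ x) := fun x =>
    ((S_cont hγ hM hφ).comp (Continuous.prodMk_right x)).measurable
  have hb1 : (1 : ℝ) ≤ b := by exact_mod_cast (by omega : 1 ≤ b)
  obtain ⟨n, hn1, hn2⟩ := exists_nat_pow_near_of_lt_one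
    (show (0 : ℝ) < ((b : ℝ) ^ N)⁻¹ by positivity) (inv_le_one_of_one_le₀ (one_le_pow₀ hb1))
    hγ.1 hγ.2
  refine ⟨n + 1, fun y => ?_⟩
  obtain ⟨c, hc⟩ := selfsim hb hγ hM hφ hν (n + 1) y
  have h := deficit_le (ν := ν) (X := S b γ φ y) hb (n := b ^ (n + 1)) (by positivity)
    (Y := fun p j => c p + γ ^ (n + 1) * S b γ φ ((y + p) / (b : ℝ) ^ (n + 1)) j)
    (fun p => ((hSm _).const_mul _).const_add _)
    (fun N' j => by
      rw [Nat.cast_pow]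
      exact hc _ (measurableSet_badicI N' j))
    C N hm hα hε (Q := Real.log (2 * C + 1) + 1)
    (fun p => ent_affine_le hb (hSm _) (hC _) _ (pow_nonneg hγ.1.le _) hn1.le)
    (fun p F hF => sum_heavy_le hb hγ.1 (hSm _) (c p) m
      (by rw [pow_succ']; exact mul_le_mul_of_nonneg_left hn2 hγ.1.le) _ F hF)
  rwa [Nat.cast_pow] at h

end Bridge

/-! ### Averaging over words -/

section Average

variable {b : ℕ}

/-- Averaging over the `n'`-th level preimages of the points of the grid of level `n` is averaging
over the grid of level `n + n'`. -/
theorem grid_refine (hb : 2 ≤ b) (n n' : ℕ) (g : ℝ → ℝ) :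
    ((b : ℝ) ^ n)⁻¹ * ∑ p ∈ Finset.range (b ^ n), ((b : ℝ) ^ n')⁻¹ *
      ∑ q ∈ Finset.range (b ^ n'), g ((p / (b : ℝ) ^ n + q) / (b : ℝ) ^ n') =
    ((b : ℝ) ^ (n + n'))⁻¹ * ∑ r ∈ Finset.range (b ^ (n + n')), g (r / (b : ℝ) ^ (n + n')) := by
  have h0 : (b : ℝ) ≠ 0 := by positivity
  rw [← Finset.mul_sum, ← mul_assoc, ← mul_inv, ← pow_add, Finset.sum_comm, pow_add b n n',
    mul_comm (b ^ n) (b ^ n'), sum_range_mul' (fun r => g (r / (b : ℝ) ^ (n + n')))]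
  congr 1
  refine Finset.sum_congr rfl fun q _ => Finset.sum_congr rfl fun p _ => ?_
  congr 1
  push_cast
  rw [pow_add]
  field_simp
  ring

/-- Markov's inequality for a finite average. -/
theorem card_filter_ge (n : ℕ) {D : ℕ → ℝ} (hD : ∀ p, 0 ≤ D p) {ε η : ℝ} (hε : 0 < ε)
    (h : (n : ℝ)⁻¹ * ∑ p ∈ Finset.range n, D p < ε * η) (hn : 0 < n) (P : ℕ → Prop)
    [DecidablePred P] (hP : ∀ p, D p < ε → P p) :
    1 - η < (((Finset.range n).filter P).card : ℝ) / n := by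
  have hn' : (0 : ℝ) < n := by exact_mod_cast hn
  have h1 : ((Finset.range n).filter P).card + ((Finset.range n).filter fun p => ¬ P p).card = n := by
    rw [Finset.card_filter_add_card_filter_not, Finset.card_range]
  have h2 : (((Finset.range n).filter fun p => ¬ P p).card : ℝ) * ε ≤
      ∑ p ∈ Finset.range n, D p := by
    rw [← nsmul_eq_mul]
    refine (Finset.card_nsmul_le_sum _ D ε fun p hp => ?_).trans
      (Finset.sum_le_sum_of_subset_of_nonneg (Finset.filter_subset _ _) fun p _ _ => hD p)
    by_contra! hlt
    exact (Finset.mem_filter.1 hp).2 (hP p hlt)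
  have h3 : (((Finset.range n).filter P).card : ℝ) +
      (((Finset.range n).filter fun p => ¬ P p).card : ℝ) = n := by exact_mod_cast h1
  rw [inv_mul_lt_iff₀ hn'] at h
  rw [lt_div_iff₀ hn']
  have h4 : (((Finset.range n).filter fun p => ¬ P p).card : ℝ) * ε < (n * η) * ε := by
    linarith
  have h5 := lt_of_mul_lt_mul_right h4 hε.le
  linarith

/-- The points `i(0)`, `i ∈ Λⁿ`, are the points of the grid of level `n`. -/
theorem card_words (n : ℕ) (P : ℝ → Prop) [DecidablePred fun p : ℕ => P (p / (b : ℝ) ^ n)] :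
    Nat.card {i : Fin n → Fin b // P (fpt b i 0)} =
      ((Finset.range (b ^ n)).filter fun p : ℕ => P (p / (b : ℝ) ^ n)).card := by
  classical
  have e : ∀ i : Fin n → Fin b, P (fpt b i 0) ↔
      P (((finFunctionFinEquiv i : Fin (b ^ n)) : ℕ) / (b : ℝ) ^ n) := fun i => by
    rw [finFunctionFinEquiv_apply, fpt, fval, zero_add]
  rw [Nat.card_congr (finFunctionFinEquiv.subtypeEquiv
    (q := fun p : Fin (b ^ n) => P ((p : ℕ) / (b : ℝ) ^ n)) e), Nat.card_eq_fintype_card,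
    Fintype.card_subtype]
  refine Finset.card_bij (fun p _ => (p : ℕ)) ?_ ?_ ?_
  · intro p hp
    simpa using hp
  · intro p _ q _ h
    exact Fin.ext h
  · intro p hp
    rw [Finset.mem_filter, Finset.mem_range] at hp
    exact ⟨⟨p, hp.1⟩, by simpa using hp.2, rfl⟩

end Average

/-! ### Entropy porosity -/

section Porosity

variable {b : ℕ} {γ : ℝ} {φ : ℝ → ℝ} {ν : Measure (ℕ → Fin b)}

/-- Averaging `porous_ge` over the scales `1, …, k`, the entropies of the components telescope to
at most the entropy at level `k + m`. -/
theorem avg_porous_ge [IsProbabilityMeasure ν] (hb : 2 ≤ b) {X : (ℕ → Fin b) → ℝ}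
    (hX : Measurable X) {C : ℕ} (hC : ∀ ω, |X ω| < C) {m k : ℕ} (hm : 0 < m) (hk : 0 < k)
    (α : ℝ) {ε : ℝ} (hε : 0 < ε) :
    1 - ε⁻¹ * (ent b ν X C (k + m) / (k * Real.log b) - α +
        (k : ℝ)⁻¹ * ∑ i ∈ Finset.range k, deficit b ν X C (i + 1) m α) ≤
      (k : ℝ)⁻¹ * ∑ i ∈ Finset.range k, ((ν.map X) {x | (1 / m : ℝ) *
        entropy b (component b (ν.map X) (i + 1) x) (i + 1 + m) < α + ε}).toReal := by
  have hm' : (0 : ℝ) < m := by exact_mod_cast hm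
  have hk' : (0 : ℝ) < k := by exact_mod_cast hk
  have hlb : 0 < Real.log b := Real.log_pos (by exact_mod_cast (by omega : 1 < b))
  have h1 := Finset.sum_le_sum fun i (_ : i ∈ Finset.range k) =>
    porous_ge (ν := ν) hb hX hC (i + 1) hm α hε
  rw [Finset.sum_sub_distrib, ← Finset.mul_sum, Finset.sum_add_distrib, Finset.sum_sub_distrib,
    ← Finset.sum_div, Finset.sum_const, Finset.sum_const, Finset.card_range, nsmul_eq_mul,
    nsmul_eq_mul, mul_one] at h1
  have h2 : (∑ i ∈ Finset.range k, (ent b ν X C (i + 1 + m) - ent b ν X C (i + 1))) /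
      (m * Real.log b) ≤ ent b ν X C (k + m) / Real.log b := by
    rw [div_le_div_iff₀ (by positivity) hlb]
    nlinarith [sum_cent_le (ν := ν) hb hX C m k]
  refine le_trans ?_ (mul_le_mul_of_nonneg_left h1 (inv_pos.2 hk').le)
  rw [mul_sub, inv_mul_cancel₀ hk'.ne', mul_left_comm]
  have h3 : (k : ℝ)⁻¹ * ((∑ i ∈ Finset.range k, (ent b ν X C (i + 1 + m) - ent b ν X C (i + 1))) /
      (m * Real.log b) - k * α + ∑ i ∈ Finset.range k, deficit b ν X C (i + 1) m α) ≤
      ent b ν X C (k + m) / (k * Real.log b) - α +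
        (k : ℝ)⁻¹ * ∑ i ∈ Finset.range k, deficit b ν X C (i + 1) m α := by
    have h4 := mul_le_mul_of_nonneg_left h2 (inv_pos.2 hk').le
    have e1 : (k : ℝ)⁻¹ * (ent b ν X C (k + m) / Real.log b) =
        ent b ν X C (k + m) / (k * Real.log b) := by
      field_simp
    have e2 : (k : ℝ)⁻¹ * (k * α) = α := inv_mul_cancel_left₀ hk'.ne' α
    rw [mul_add, mul_sub, e2]
    linarith
  exact sub_le_sub_left (mul_le_mul_of_nonneg_left h3 (inv_pos.2 hε).le) _

/-- The mean entropy at a large level `k` of the measures `m_{i(0)}`, `i ∈ Λⁿ`, is about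
`k α log b`. -/
theorem avg_ent_le [IsProbabilityMeasure ν] (hb : 2 ≤ b)
    (hS : Continuous fun p : ℝ × (ℕ → Fin b) => S b γ φ p.1 p.2) {α : ℝ} (hα0 : 0 ≤ α)
    (hα : ∀ᵐ x ∂(volume.restrict (Icc (0 : ℝ) 1)), IsExactDim (mMeas b γ φ ν x) α)
    {L : ℝ} (hL : ∀ x y j, |S b γ φ x j - S b γ φ y j| ≤ L * |x - y|)
    {C : ℕ} (hC0 : 0 < C) {ε' : ℝ} (hε : 0 < ε') (hε1 : ε' ≤ 1) :
    ∃ M : ℕ, ∀ k ≥ M, ∃ N₀ : ℕ, ∀ N ≥ N₀,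
      ((b : ℝ) ^ N)⁻¹ * ∑ p ∈ Finset.range (b ^ N), ent b ν (S b γ φ (p / (b : ℝ) ^ N)) C k ≤
        k * (α + 2 * ε') * Real.log b + (Real.log 6 + 1 + Real.log (4 * C)) := by
  have hSm : ∀ x, Measurable (S b γ φ x) := fun x =>
    (hS.comp (Continuous.prodMk_right x)).measurable
  have hlb : 0 < Real.log b := Real.log_pos (by exact_mod_cast (by omega : 1 < b))
  have hC1 : (1 : ℝ) ≤ C := by exact_mod_cast hC0
  have hb0 : (0 : ℝ) < b := by positivity
  obtain ⟨M, hM⟩ := grid_up (ν := ν) hb hS hα hL hε hε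
  refine ⟨M, fun k hk => ?_⟩
  obtain ⟨N₀, hN₀⟩ := hM k hk
  refine ⟨N₀, fun N hN => ?_⟩
  have h := hN₀ N hN
  have hbN : (0 : ℝ) < (b : ℝ) ^ N := by positivity
  have hlog : Real.log (2 * (2 * C * (b : ℝ) ^ k)) = Real.log (4 * C) + k * Real.log b := by
    rw [show 2 * (2 * C * (b : ℝ) ^ k) = (4 * C) * (b : ℝ) ^ k by ring,
      Real.log_mul (by positivity) (by positivity), Real.log_pow]
  have hlC : 0 ≤ Real.log (4 * C) := Real.log_nonneg (by linarith)
  have hT : 0 ≤ Real.log (2 * (2 * C * (b : ℝ) ^ k)) := by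
    rw [hlog]; positivity
  have h1 := fun p : ℕ => ent_le_of_nbhd (ν := ν) hb (hSm (p / (b : ℝ) ^ N)) hC0 k
    (θ := k * (α + ε') * Real.log b) (by positivity) fun F hF =>
      sum_light_le hb (hSm _) k _ F hF
  have h2 := mul_le_mul_of_nonneg_left (Finset.sum_le_sum fun p (_ : p ∈ Finset.range (b ^ N)) =>
    h1 p) (inv_pos.2 hbN).le
  refine h2.trans ?_
  rw [Finset.sum_add_distrib, Finset.sum_const, Finset.card_range, nsmul_eq_mul, Nat.cast_pow,
    mul_add, inv_mul_cancel_left₀ hbN.ne', ← Finset.sum_mul, ← mul_assoc]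
  have h3 := mul_le_mul_of_nonneg_right h hT
  have h4 : ε' * Real.log (2 * (2 * C * (b : ℝ) ^ k)) ≤
      Real.log (4 * C) + ε' * (k * Real.log b) := by
    rw [hlog, mul_add]
    nlinarith
  linarith

/-- The mean deficit of the measures `m_{i(0)}`, `i ∈ Λⁿ`, is small, uniformly in the scale. -/
theorem avg_deficit_le (hb : 2 ≤ b) (hγ : γ ∈ Ioo (0 : ℝ) 1) {M : ℝ} (hM : ∀ x, |φ x| ≤ M)
    (hφ : Continuous φ) (hν : IsBernoulli b ν) {C : ℕ} (hC : ∀ y j, |S b γ φ y j| < C)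
    {α : ℝ} (hα1 : α ≤ 1)
    (hα : ∀ᵐ x ∂(volume.restrict (Icc (0 : ℝ) 1)), IsExactDim (mMeas b γ φ ν x) α)
    {L : ℝ} (hL : ∀ x y j, |S b γ φ x j - S b γ φ y j| ≤ L * |x - y|)
    {ε' : ℝ} (hε : 0 < ε') :
    ∃ M₁ : ℕ, ∀ m ≥ M₁, ∃ N₀ : ℕ, ∀ n ≥ N₀, ∀ N : ℕ,
      ((b : ℝ) ^ n)⁻¹ * ∑ p ∈ Finset.range (b ^ n),
        deficit b ν (S b γ φ (p / (b : ℝ) ^ n)) C N m α ≤ 3 * ε' := by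
  have := hν.1
  have hlb : 0 < Real.log b := Real.log_pos (by exact_mod_cast (by omega : 1 < b))
  have hb0 : (0 : ℝ) < b := by positivity
  obtain ⟨M₁, hM₁⟩ := grid_low (ν := ν) hb (S_cont hγ hM hφ) hα hL (inv_pos.2 hγ.1) hε hε
  obtain ⟨M₂, hM₂⟩ := exists_nat_ge ((Real.log (2 * C + 1) + 1) / (ε' * Real.log b))
  refine ⟨max M₁ (max M₂ 1), fun m hm => ?_⟩
  obtain ⟨N₀, hN₀⟩ := hM₁ m ((le_max_left _ _).trans hm)
  have hm0 : 0 < m := lt_of_lt_of_le one_pos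
    (((le_max_right _ _).trans (le_max_right _ _)).trans hm)
  have hm' : (0 : ℝ) < m := by exact_mod_cast hm0
  have hQ : (Real.log (2 * C + 1) + 1) / (m * Real.log b) ≤ ε' := by
    have h1 : (M₂ : ℝ) ≤ m := by
      exact_mod_cast ((le_max_left _ _).trans (le_max_right _ _)).trans hm
    have h2 := hM₂.trans h1
    rw [div_le_iff₀ (by positivity)] at h2 ⊢
    linarith
  refine ⟨N₀, fun n hn N => ?_⟩
  obtain ⟨n', hn'⟩ := deficit_S_le hb hγ hM hφ hν hC N hm0 hα1 hε
  have hbn : (0 : ℝ) < (b : ℝ) ^ n := by positivity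
  have h2 := mul_le_mul_of_nonneg_left (Finset.sum_le_sum fun (p : ℕ)
    (_ : p ∈ Finset.range (b ^ n)) => hn' (p / (b : ℝ) ^ n)) (inv_pos.2 hbn).le
  refine h2.trans ?_
  rw [Finset.sum_add_distrib, Finset.sum_add_distrib, Finset.sum_const, Finset.sum_const,
    Finset.card_range, nsmul_eq_mul, nsmul_eq_mul, Nat.cast_pow, mul_add, mul_add,
    inv_mul_cancel_left₀ hbn.ne', inv_mul_cancel_left₀ hbn.ne',
    grid_refine hb n n' (fun z => ν.real {j | Real.exp (-(m * (α - ε') * Real.log b)) <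
      ballMass b γ φ ν z j (γ⁻¹ * ((b : ℝ) ^ m)⁻¹)})]
  have h3 := hN₀ (n + n') (hn.trans (Nat.le_add_right _ _))
  linarith

/-- For `y` on a fine grid, the mean over the grid of the proportion of the mass of `m_y`, averaged
over the scales `1, …, k`, where the component has entropy at least `α + ε`, is small. -/
theorem avg_defect_lt (hb : 2 ≤ b) (hγ : γ ∈ Ioo (0 : ℝ) 1)
    (hper : ∀ x : ℝ, φ (x + 1) = φ x) {K : ℝ≥0} (hlip : LipschitzWith K φ)
    (hν : IsBernoulli b ν) {α : ℝ} (hα : α ∈ Icc (0 : ℝ) 1)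
    (hαdim : ∀ᵐ x ∂(volume.restrict (Icc (0 : ℝ) 1)), IsExactDim (mMeas b γ φ ν x) α)
    {ε : ℝ} (hε : 0 < ε) :
    ∃ M₁ : ℕ, ∀ m : ℕ, M₁ ≤ m → ∃ K₁ : ℕ, 0 < K₁ ∧ ∀ k : ℕ, K₁ ≤ k →
      ∃ N₁ : ℕ, ∀ n : ℕ, N₁ ≤ n →
        ((b : ℝ) ^ n)⁻¹ * ∑ p ∈ Finset.range (b ^ n), (1 - (k : ℝ)⁻¹ * ∑ i ∈ Finset.range k,
          ((mMeas b γ φ ν (p / (b : ℝ) ^ n)) {x | (1 / m : ℝ) *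
            entropy b (component b (mMeas b γ φ ν (p / (b : ℝ) ^ n)) (i + 1) x) (i + 1 + m) <
              α + ε}).toReal) < ε * ε := by
  have := hν.1
  have hlb : 0 < Real.log b := Real.log_pos (by exact_mod_cast (by omega : 1 < b))
  have hb0 : (0 : ℝ) < b := by positivity
  obtain ⟨M, -, hM⟩ := phi_bdd hper hlip
  have hφ := hlip.continuous
  have hS := S_cont (b := b) hγ hM hφ
  have hSm : ∀ x, Measurable (S b γ φ x) := fun x =>
    (hS.comp (Continuous.prodMk_right x)).measurable
  obtain ⟨C, hC⟩ : ∃ C : ℕ, ∀ y j, |S b γ φ y j| < C := by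
    obtain ⟨C, hC⟩ := exists_nat_gt ((1 - γ)⁻¹ * M)
    exact ⟨C, fun y j => (S_bdd hγ hM y j).trans_lt hC⟩
  have hC0 : 0 < C := by
    have h := hC 0 fun _ => ⟨0, by omega⟩
    exact_mod_cast (abs_nonneg _).trans_lt h
  have hL : ∀ x y j, |S b γ φ x j - S b γ φ y j| ≤ (1 - γ)⁻¹ * K * |x - y| := fun x y j => by
    rw [mul_assoc]; exact S_lip hb hγ hM hlip x y j
  -- Three errors `ε'` come from the entropy at level `k + m`, three from the deficit.
  obtain ⟨ε', hε', hε1, hεε⟩ : ∃ ε' : ℝ, 0 < ε' ∧ ε' ≤ 1 ∧ 6 * ε' < ε * (ε * ε) := by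
    refine ⟨min 1 (ε * (ε * ε) / 7), by positivity, min_le_left _ _, ?_⟩
    have h1 := min_le_right 1 (ε * (ε * ε) / 7)
    have h2 : 0 < ε * (ε * ε) := by positivity
    linarith
  obtain ⟨M₁, hM₁⟩ := avg_deficit_le hb hγ hM hφ hν hC hα.2 hαdim hL hε'
  obtain ⟨M₂, hM₂⟩ := avg_ent_le (ν := ν) hb hS hα.1 hαdim hL hC0 hε' hε1
  refine ⟨max M₁ 1, fun m hm => ?_⟩
  have hm0 : 0 < m := lt_of_lt_of_le one_pos ((le_max_right _ _).trans hm)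
  set c₀ := Real.log 6 + 1 + Real.log (4 * C) with hc₀
  obtain ⟨K₁, hK₁⟩ := exists_nat_ge ((3 * m * Real.log b + c₀) / (ε' * Real.log b))
  refine ⟨max K₁ (max M₂ 1), by simp, fun k hk => ?_⟩
  have hk0 : 0 < k := lt_of_lt_of_le one_pos
    (((le_max_right _ _).trans (le_max_right _ _)).trans hk)
  have hk' : (0 : ℝ) < k := by exact_mod_cast hk0
  have hkc : 3 * m * Real.log b + c₀ ≤ k * (ε' * Real.log b) := by
    have h1 : (K₁ : ℝ) ≤ k := by exact_mod_cast (le_max_left _ _).trans hk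
    exact (div_le_iff₀ (by positivity)).1 (hK₁.trans h1)
  obtain ⟨N₁, hN₁⟩ := hM₁ m ((le_max_left _ _).trans hm)
  obtain ⟨N₂, hN₂⟩ := hM₂ (k + m)
    ((((le_max_left _ _).trans (le_max_right _ _)).trans hk).trans (Nat.le_add_right _ _))
  refine ⟨max N₁ N₂, fun n hn => ?_⟩
  have hbn : (0 : ℝ) < (b : ℝ) ^ n := by positivity
  have hdef := hN₁ n ((le_max_left _ _).trans hn)
  have hent := hN₂ n ((le_max_right _ _).trans hn)
  set y : ℕ → ℝ := fun p => p / (b : ℝ) ^ n with hy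
  have h1 : ∀ p ∈ Finset.range (b ^ n), (1 - (k : ℝ)⁻¹ * ∑ i ∈ Finset.range k,
      ((mMeas b γ φ ν (y p)) {x | (1 / m : ℝ) *
        entropy b (component b (mMeas b γ φ ν (y p)) (i + 1) x) (i + 1 + m) <
          α + ε}).toReal) ≤ ε⁻¹ * (ent b ν (S b γ φ (y p)) C (k + m) / (k * Real.log b) - α +
        (k : ℝ)⁻¹ * ∑ i ∈ Finset.range k, deficit b ν (S b γ φ (y p)) C (i + 1) m α) := by
    intro p _
    have h := avg_porous_ge (ν := ν) hb (hSm (y p)) (hC _) hm0 hk0 α hε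
    unfold mMeas
    linarith
  have h2 := mul_le_mul_of_nonneg_left (Finset.sum_le_sum h1) (inv_pos.2 hbn).le
  refine h2.trans_lt ?_
  rw [← Finset.mul_sum, mul_left_comm, inv_mul_lt_iff₀ hε, Finset.sum_add_distrib,
    Finset.sum_sub_distrib, ← Finset.sum_div, ← Finset.mul_sum, Finset.sum_comm,
    Finset.sum_const, Finset.card_range, nsmul_eq_mul, Nat.cast_pow, mul_add, mul_sub,
    inv_mul_cancel_left₀ hbn.ne', mul_left_comm, Finset.mul_sum, ← mul_div_assoc]
  have h3 : (k : ℝ)⁻¹ * ∑ i ∈ Finset.range k, ((b : ℝ) ^ n)⁻¹ * ∑ p ∈ Finset.range (b ^ n),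
      deficit b ν (S b γ φ (y p)) C (i + 1) m α ≤ 3 * ε' := by
    rw [inv_mul_le_iff₀ hk']
    refine (Finset.sum_le_card_nsmul _ _ (3 * ε') fun i _ => hdef (i + 1)).trans ?_
    rw [Finset.card_range, nsmul_eq_mul]
  have h4 : (((b : ℝ) ^ n)⁻¹ * ∑ p ∈ Finset.range (b ^ n), ent b ν (S b γ φ (y p)) C (k + m)) /
      (k * Real.log b) ≤ α + 3 * ε' := by
    rw [div_le_iff₀ (by positivity)]
    refine hent.trans ?_
    push_cast
    have h5 : m * Real.log b * (α + 2 * ε') ≤ m * Real.log b * 3 :=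
      mul_le_mul_of_nonneg_left (by linarith [hα.2]) (by positivity)
    nlinarith
  linarith

end Porosity

/-- **Entropy porosity.** For all `ε > 0`, `m ≥ M₁(ε)`, `k ≥ K₁(ε,m)`, `n ≥ N₁(ε,m,k)`,
the proportion of words `i ∈ Λⁿ` such that `m_{i(0)}` is `(α,ε,m)`-entropy porous from
scale `1` to `k` exceeds `1 - ε`.  Here `α` is the Ledrappier–Young constant. -/
theorem entropy_porosity (b : ℕ) (hb : 2 ≤ b) (γ : ℝ) (hγ : γ ∈ Ioo (0 : ℝ) 1)
    (φ : ℝ → ℝ) (hper : ∀ x : ℝ, φ (x + 1) = φ x) (K : ℝ≥0) (hlip : LipschitzWith K φ)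
    (hH : CondH b γ φ) (ν : Measure (ℕ → Fin b)) (hν : IsBernoulli b ν)
    (α : ℝ) (hα : α ∈ Icc (0 : ℝ) 1)
    (hαdim : ∀ᵐ x ∂(volume.restrict (Icc (0 : ℝ) 1)), IsExactDim (mMeas b γ φ ν x) α) :
    ∀ ε : ℝ, 0 < ε → ∃ M₁ : ℕ, ∀ m : ℕ, M₁ ≤ m → ∃ K₁ : ℕ, ∀ k : ℕ, K₁ ≤ k →
      ∃ N₁ : ℕ, ∀ n : ℕ, N₁ ≤ n →
        ((Nat.card {i : Fin n → Fin b //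
            EntPorous b (mMeas b γ φ ν (fpt b i 0)) α ε m 1 k} : ℝ) / (b : ℝ) ^ n) >
          1 - ε := by
  classical
  intro ε hε
  have := hν.1
  have hb0 : (0 : ℝ) < b := by positivity
  have hSm : ∀ x, Measurable (S b γ φ x) := fun x => by
    obtain ⟨M, -, hM⟩ := phi_bdd hper hlip
    exact ((S_cont hγ hM hlip.continuous).comp (Continuous.prodMk_right x)).measurable
  have hprob : ∀ x, IsProbabilityMeasure (mMeas b γ φ ν x) := fun x =>
    Measure.isProbabilityMeasure_map (hSm x).aemeasurable
  obtain ⟨M₁, hM₁⟩ := avg_defect_lt hb hγ hper hlip hν hα hαdim hε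
  refine ⟨M₁, fun m hm => ?_⟩
  obtain ⟨K₁, hK0, hK₁⟩ := hM₁ m hm
  refine ⟨K₁, fun k hk => ?_⟩
  obtain ⟨N₁, hN₁⟩ := hK₁ k hk
  have hk' : (0 : ℝ) < k := by exact_mod_cast hK0.trans_le hk
  refine ⟨N₁, fun n hn => ?_⟩
  have h := hN₁ n hn
  rw [card_words n fun y => EntPorous b (mMeas b γ φ ν y) α ε m 1 k, gt_iff_lt]
  have h1 := card_filter_ge (b ^ n) (ε := ε) (η := ε)
    (D := fun p => 1 - (k : ℝ)⁻¹ * ∑ i ∈ Finset.range k,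
      ((mMeas b γ φ ν (p / (b : ℝ) ^ n)) {x | (1 / m : ℝ) *
        entropy b (component b (mMeas b γ φ ν (p / (b : ℝ) ^ n)) (i + 1) x) (i + 1 + m) <
          α + ε}).toReal)
    (fun p => by
      rw [sub_nonneg, inv_mul_le_iff₀ hk', mul_one]
      have h2 := Finset.sum_le_card_nsmul (Finset.range k) (fun i =>
        ((mMeas b γ φ ν (p / (b : ℝ) ^ n)) {x | (1 / m : ℝ) *
          entropy b (component b (mMeas b γ φ ν (p / (b : ℝ) ^ n)) (i + 1) x) (i + 1 + m) <
            α + ε}).toReal) 1 fun i _ => measureReal_le_one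
      rw [Finset.card_range, nsmul_eq_mul, mul_one] at h2
      exact h2)
    hε (by rw [Nat.cast_pow]; exact h) (by positivity)
    (fun p => EntPorous b (mMeas b γ φ ν (p / (b : ℝ) ^ n)) α ε m 1 k)
    (fun p hp => by
      rw [EntPorous, gt_iff_lt, Nat.cast_one, sub_add_cancel, one_div,
        ← Finset.Ico_add_one_right_eq_Icc, Finset.sum_Ico_eq_sum_range, Nat.add_sub_cancel]
      simp_rw [add_comm 1]
      linarith)
  rwa [Nat.cast_pow] at h1

end

end Skew
end

section
/- Let b ≥ 2 be an integer, γ ∈ (0,1), and let φ : ℝ → ℝ be a ℤ-periodic Lipschitz function satisfying condition (H). Then for every x ∈ [0,1] the measure m_x has no atoms, i.e. m_x({y}) = 0 for every y ∈ ℝ. -/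
/-!
The proof shows that an atom forces `S(x, ·)` to be constant in the sequence for every `x ∈ [0,1]`,
which contradicts condition (H).

Suppose `m_x({y}) > 0` and let `E = {j | S(x,j) = y}`, a set of positive `ν`-measure. For each `k`
there is a finite word `w` such that `E` meets every cylinder `[wu]` with `|u| = k`: otherwise `E`
misses, inside each cylinder, a sub-cylinder of relative measure `b^{-k}`, and counting cylinders
gives `ν(E) ≤ (1 - b^{-k})^m` for every `m` (`exists_rich_word`). By the cocycle identity
`S(x, wj) = S(x,w) + γ^{|w|} S(w(x), j)` (`S_split`), the function `S(w(x), ·)` takes one and the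
same value at points of every cylinder of length `k`, so its oscillation is `O(γ^k)`
(`exists_small_osc`). Compactness of `[0,1]` and continuity of `S(·,j)` give a point
`d ∈ [0,1]` for which `S(d, ·)` is constant.

The set of all points with this property is closed, and by the cocycle identity it is invariant
under the maps `x ↦ (x+a)/b`, `a ∈ Λ`. These are the contractions of an iterated function system
with attractor `[0,1]`, so the set contains `[0,1]` (`const_of_const_point`).
-/

open MeasureTheory Set Filter
open scoped ENNReal NNReal Topology

namespace Skew

noncomputable section

variable (b : ℕ) (γ : ℝ) (φ : ℝ → ℝ)

/-! ### The cocycle identity and regularity of `S` -/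

/-- The shift by `n` places on sequences. -/
def shift {b : ℕ} (n : ℕ) (j : ℕ → Fin b) : ℕ → Fin b := fun t => j (n + t)

/-- The point `w(x)`, where `w` is the prefix of length `n` of `j`. -/
def prePt (b : ℕ) (x : ℝ) (j : ℕ → Fin b) (n : ℕ) : ℝ := (x + sval b j n) / (b : ℝ) ^ n

theorem sval_add (b : ℕ) (j : ℕ → Fin b) (n m : ℕ) :
    sval b j (n + m) = sval b j n + b ^ n * sval b (shift n j) m := by
  simp only [sval, Finset.sum_range_add, Finset.mul_sum, shift]
  congr 1
  refine Finset.sum_congr rfl fun k _ => ?_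
  ring

theorem sval_congr (b : ℕ) (i j : ℕ → Fin b) (n : ℕ) (h : ∀ t < n, i t = j t) :
    sval b i n = sval b j n := by
  refine Finset.sum_congr rfl fun k hk => ?_
  rw [h k (Finset.mem_range.1 hk)]

theorem sval_lt (b : ℕ) (j : ℕ → Fin b) (n : ℕ) : sval b j n + 1 ≤ b ^ n := by
  induction n with
  | zero => simp [sval]
  | succ n ih =>
    have h1 : sval b j (n + 1) = sval b j n + (j n).val * b ^ n := by
      simp [sval, Finset.sum_range_succ]
    have h2 : ((j n).val + 1) * b ^ n ≤ b * b ^ n := Nat.mul_le_mul_right _ (j n).isLt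
    rw [h1, pow_succ']
    linarith

theorem prePt_mem (b : ℕ) (hb : 2 ≤ b) (x : ℝ) (hx : x ∈ Icc (0 : ℝ) 1) (j : ℕ → Fin b) (n : ℕ) :
    prePt b x j n ∈ Icc (0 : ℝ) 1 := by
  have hb0 : (0 : ℝ) < b := by positivity
  have h : ((sval b j n : ℝ) + 1) ≤ (b : ℝ) ^ n := by exact_mod_cast sval_lt b j n
  have hx0 := hx.1
  refine ⟨by unfold prePt; positivity, ?_⟩
  unfold prePt
  rw [div_le_one (by positivity)]
  linarith [hx.2]

theorem prePt_shift (b : ℕ) (hb : 2 ≤ b) (x : ℝ) (j : ℕ → Fin b) (n m : ℕ) :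
    (x + sval b j (n + m)) / (b : ℝ) ^ (n + m)
      = (prePt b x j n + sval b (shift n j) m) / (b : ℝ) ^ m := by
  have hb0 : (b : ℝ) ≠ 0 := by positivity
  rw [sval_add, prePt]
  push_cast
  field_simp
  ring

theorem exists_bound (φ : ℝ → ℝ) (hper : ∀ x : ℝ, φ (x + 1) = φ x) (K : ℝ≥0)
    (hlip : LipschitzWith K φ) : ∃ C : ℝ, 0 ≤ C ∧ ∀ x, |φ x| ≤ C := by
  refine ⟨|φ 0| + K, by positivity, fun x => ?_⟩
  have hp : Function.Periodic φ 1 := hper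
  have h1 : φ (Int.fract x) = φ x := by
    have h := hp.sub_zsmul_eq (x := x) ⌊x⌋
    rw [zsmul_eq_mul, mul_one] at h
    exact h
  have h2 := hlip.dist_le_mul (Int.fract x) 0
  rw [Real.dist_eq, Real.dist_eq, sub_zero, abs_of_nonneg (Int.fract_nonneg x), h1] at h2
  have h3 : (K : ℝ) * Int.fract x ≤ K := by
    have := Int.fract_lt_one x
    nlinarith [K.coe_nonneg]
  have h4 := abs_sub_abs_le_abs_sub (φ x) (φ 0)
  linarith

section Bounded

variable {b : ℕ} {γ : ℝ} {φ : ℝ → ℝ} {C : ℝ}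

theorem norm_term_le (hγ : γ ∈ Ioo (0 : ℝ) 1) (hC : ∀ x, |φ x| ≤ C) (u : ℕ → ℝ) (n : ℕ) :
    ‖γ ^ n * φ (u n)‖ ≤ C * γ ^ n := by
  have := hγ.1
  rw [Real.norm_eq_abs, abs_mul, abs_of_pos (by positivity), mul_comm]
  gcongr
  exact hC _

theorem hasSum_geom (hγ : γ ∈ Ioo (0 : ℝ) 1) (C : ℝ) :
    HasSum (fun n : ℕ => C * γ ^ n) (C / (1 - γ)) := by
  rw [div_eq_mul_inv]
  exact (hasSum_geometric_of_lt_one hγ.1.le hγ.2).mul_left C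

theorem summable_term (hγ : γ ∈ Ioo (0 : ℝ) 1) (hC : ∀ x, |φ x| ≤ C) (u : ℕ → ℝ) :
    Summable fun n : ℕ => γ ^ n * φ (u n) :=
  Summable.of_norm_bounded (hasSum_geom hγ C).summable (norm_term_le hγ hC u)

theorem abs_S_le (hγ : γ ∈ Ioo (0 : ℝ) 1) (hC : ∀ x, |φ x| ≤ C) (x : ℝ) (j : ℕ → Fin b) :
    |S b γ φ x j| ≤ C / (1 - γ) :=
  tsum_of_norm_bounded (hasSum_geom hγ C)
    (norm_term_le hγ hC fun n => (x + sval b j (n + 1)) / (b : ℝ) ^ (n + 1))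

/-- The cocycle identity `S(x, wj) = S(x,w) + γ^{|w|} S(w(x), j)`. -/
theorem S_split (hb : 2 ≤ b) (hγ : γ ∈ Ioo (0 : ℝ) 1) (hC : ∀ x, |φ x| ≤ C) (x : ℝ)
    (j : ℕ → Fin b) (n : ℕ) :
    S b γ φ x j =
      ∑ i ∈ Finset.range n, γ ^ i * φ ((x + sval b j (i + 1)) / (b : ℝ) ^ (i + 1))
        + γ ^ n * S b γ φ (prePt b x j n) (shift n j) := by
  unfold S
  rw [← (summable_term hγ hC
    fun n => (x + sval b j (n + 1)) / (b : ℝ) ^ (n + 1)).sum_add_tsum_nat_add n, ← tsum_mul_left]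
  congr 1
  refine tsum_congr fun m => ?_
  have h := prePt_shift b hb x j n (m + 1)
  rw [← h, show m + n + 1 = n + (m + 1) by ring]
  ring

theorem S_sub_of_agree (hb : 2 ≤ b) (hγ : γ ∈ Ioo (0 : ℝ) 1) (hC : ∀ x, |φ x| ≤ C) (x : ℝ)
    (i j : ℕ → Fin b) (n : ℕ) (h : ∀ t < n, i t = j t) :
    S b γ φ x i - S b γ φ x j =
      γ ^ n * (S b γ φ (prePt b x j n) (shift n i) - S b γ φ (prePt b x j n) (shift n j)) := by
  have hp : prePt b x i n = prePt b x j n := by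
    rw [prePt, prePt, sval_congr b i j n h]
  rw [S_split hb hγ hC x i n, S_split hb hγ hC x j n, hp]
  have : ∑ k ∈ Finset.range n, γ ^ k * φ ((x + sval b i (k + 1)) / (b : ℝ) ^ (k + 1))
      = ∑ k ∈ Finset.range n, γ ^ k * φ ((x + sval b j (k + 1)) / (b : ℝ) ^ (k + 1)) := by
    refine Finset.sum_congr rfl fun k hk => ?_
    rw [sval_congr b i j (k + 1) fun t ht => h t (by have := Finset.mem_range.1 hk; omega)]
  rw [this]
  ring

theorem abs_S_sub_le_of_agree (hb : 2 ≤ b) (hγ : γ ∈ Ioo (0 : ℝ) 1) (hC : ∀ x, |φ x| ≤ C) (x : ℝ)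
    (i j : ℕ → Fin b) (n : ℕ) (h : ∀ t < n, i t = j t) :
    |S b γ φ x i - S b γ φ x j| ≤ γ ^ n * (2 * (C / (1 - γ))) := by
  have hγ0 := hγ.1
  rw [S_sub_of_agree hb hγ hC x i j n h, abs_mul, abs_of_pos (by positivity)]
  gcongr
  have h1 := abs_S_le hγ hC (prePt b x j n) (shift n i)
  have h2 := abs_S_le hγ hC (prePt b x j n) (shift n j)
  have h3 := abs_sub (S b γ φ (prePt b x j n) (shift n i)) (S b γ φ (prePt b x j n) (shift n j))
  linarith

theorem continuous_S (hγ : γ ∈ Ioo (0 : ℝ) 1) (hC : ∀ x, |φ x| ≤ C)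
    (hφ : Continuous φ) (j : ℕ → Fin b) : Continuous fun x => S b γ φ x j := by
  unfold S
  refine continuous_tsum (u := fun n => C * γ ^ n) (fun n => by fun_prop)
    (hasSum_geom hγ C).summable fun n x => ?_
  exact norm_term_le hγ hC (fun n => (x + sval b j (n + 1)) / (b : ℝ) ^ (n + 1)) n

/-! ### Propagating constancy from one point to `[0,1]` -/

/-- If `S(d, ·)` is constant at one `d ∈ [0,1]`, then `S(y, ·)` is constant at every `y ∈ [0,1]`:
the points of constancy form a closed set invariant under `x ↦ (x+a)/b`. -/
theorem const_of_const_point (hb : 2 ≤ b) (hγ : γ ∈ Ioo (0 : ℝ) 1) (hC : ∀ x, |φ x| ≤ C)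
    (hφ : Continuous φ) (d : ℝ) (hd : d ∈ Icc (0 : ℝ) 1)
    (hconst : ∀ i j : ℕ → Fin b, S b γ φ d i = S b γ φ d j) :
    ∀ y ∈ Icc (0 : ℝ) 1, ∀ i j : ℕ → Fin b, S b γ φ y i = S b γ φ y j := by
  set D : Set ℝ := {z | ∀ i j : ℕ → Fin b, S b γ φ z i = S b γ φ z j} with hD
  have hclosed : IsClosed D := by
    simp only [hD, Set.ofPred_forall]
    exact isClosed_iInter fun i => isClosed_iInter fun j =>
      isClosed_eq (continuous_S hγ hC hφ i) (continuous_S hγ hC hφ j)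
  have hb0 : (0 : ℝ) < b := by positivity
  have hb2 : (2 : ℝ) ≤ b := by exact_mod_cast hb
  have hinv : ∀ z ∈ D, ∀ a : Fin b, (z + a.val) / b ∈ D := by
    intro z hz a i j
    -- the sequences `ai` and `aj`
    let ci : ℕ → Fin b := fun t => if t = 0 then a else i (t - 1)
    let cj : ℕ → Fin b := fun t => if t = 0 then a else j (t - 1)
    have h := S_sub_of_agree hb hγ hC z ci cj 1 (by intro t ht; simp [ci, cj, Nat.lt_one_iff.1 ht])
    have hi : shift 1 ci = i := by funext t; simp [shift, ci]
    have hj : shift 1 cj = j := by funext t; simp [shift, cj]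
    have hp : prePt b z cj 1 = (z + a.val) / b := by simp [prePt, sval, cj]
    rw [hi, hj, hp, hz ci cj, sub_self, pow_one] at h
    rcases mul_eq_zero.1 h.symm with h0 | h0
    · exact absurd h0 hγ.1.ne'
    · exact sub_eq_zero.1 h0
  have hdense : ∀ n : ℕ, ∀ y ∈ Icc (0 : ℝ) 1, ∃ z ∈ D, |y - z| ≤ (1 / 2 : ℝ) ^ n := by
    intro n
    induction n with
    | zero =>
      intro y hy
      refine ⟨d, hconst, ?_⟩
      rw [pow_zero, abs_le]
      constructor <;> linarith [hy.1, hy.2, hd.1, hd.2]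
    | succ n ih =>
      intro y hy
      obtain ⟨a, ha⟩ : ∃ a : Fin b, b * y - a.val ∈ Icc (0 : ℝ) 1 := by
        by_cases hy1 : y = 1
        · -- the right endpoint carries the last digit
          refine ⟨⟨b - 1, by omega⟩, ?_⟩
          simp [hy1, Nat.cast_sub (show 1 ≤ b by omega)]
        · have hlt : y < 1 := lt_of_le_of_ne hy.2 hy1
          have h0 : 0 ≤ b * y := mul_nonneg hb0.le hy.1
          refine ⟨⟨⌊b * y⌋₊, (Nat.floor_lt h0).2 (by nlinarith)⟩, ?_, ?_⟩
          · have := Nat.floor_le h0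
            simpa using this
          · have := Nat.lt_floor_add_one (b * y)
            simp only
            linarith
      obtain ⟨z, hz, hyz⟩ := ih _ ha
      refine ⟨_, hinv z hz a, ?_⟩
      have h1 : y - (z + a.val) / b = (b * y - a.val - z) / b := by
        field_simp
        ring
      rw [h1, abs_div, abs_of_pos hb0, div_le_iff₀ hb0, pow_succ]
      have : (0 : ℝ) < (1 / 2 : ℝ) ^ n := by positivity
      nlinarith
  intro y hy
  have hmem : y ∈ closure D := by
    rw [Metric.mem_closure_iff]
    intro ε hε
    obtain ⟨n, hn⟩ := exists_pow_lt_of_lt_one hε (show (1 / 2 : ℝ) < 1 by norm_num)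
    obtain ⟨z, hz, hyz⟩ := hdense n y hy
    exact ⟨z, hz, by rw [Real.dist_eq]; exact hyz.trans_lt hn⟩
  rw [hclosed.closure_eq] at hmem
  exact hmem

end Bounded

/-! ### Sets of positive Bernoulli measure -/

/-- If `E` misses a sub-cylinder of depth `k` in every cylinder, then it meets at most
`(b^k - 1)^m` cylinders of length `mk`, whence `ν(E) ≤ (1 - b^{-k})^m` for all `m`. Hence a set of
positive measure meets all depth-`k` sub-cylinders of some cylinder. -/
theorem exists_rich_word (b : ℕ) (hb : 2 ≤ b) (ν : Measure (ℕ → Fin b)) (hν : IsBernoulli b ν)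
    (E : Set (ℕ → Fin b)) (hE : ν E ≠ 0) (k : ℕ) :
    ∃ (n : ℕ) (w : Fin n → Fin b), ∀ u : Fin k → Fin b,
      ∃ e ∈ E, (∀ t : Fin n, e t = w t) ∧ ∀ t : Fin k, e (n + t) = u t := by
  classical
  by_contra! hcon
  choose u hu using hcon
  -- the words of length `n` whose cylinder meets `E`
  let T : (n : ℕ) → Finset (Fin n → Fin b) :=
    fun n => Finset.univ.filter fun w => ∃ e ∈ E, ∀ t : Fin n, e t = w t
  have hstep : ∀ n, (T (n + k)).card ≤ (T n).card * (b ^ k - 1) := by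
    intro n
    have hsub : T (n + k) ⊆
        (T n).biUnion fun w => (Finset.univ.erase (u n w)).image (Fin.append w) := by
      intro v hv
      obtain ⟨e, he, hev⟩ := (Finset.mem_filter.1 hv).2
      simp only [Finset.mem_biUnion, Finset.mem_image, Finset.mem_erase, Finset.mem_univ, and_true]
      refine ⟨fun t => e t, Finset.mem_filter.2 ⟨Finset.mem_univ _, e, he, fun _ => rfl⟩,
        fun t => e (n + t), ?_, ?_⟩
      · intro h
        obtain ⟨t, ht⟩ := hu n (fun t => e t) e he fun _ => rfl
        exact ht (congrFun h t)
      · funext t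
        refine Fin.addCases (fun i => ?_) (fun i => ?_) t
        · rw [Fin.append_left, ← hev]; rfl
        · rw [Fin.append_right, ← hev]; rfl
    refine (Finset.card_le_card hsub).trans (Finset.card_biUnion_le_card_mul _ _ _ fun w _ => ?_)
    refine Finset.card_image_le.trans ?_
    simp [Finset.card_erase_of_mem]
  have hcard : ∀ m : ℕ, (T (m * k)).card ≤ (b ^ k - 1) ^ m := by
    intro m
    induction m with
    | zero =>
      refine (Finset.card_le_univ _).trans ?_
      simp
    | succ m ih =>
      rw [Nat.succ_mul, pow_succ]
      exact (hstep _).trans (Nat.mul_le_mul_right _ ih)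
  have hmeas : ∀ n, ν E ≤ (T n).card * ((b : ℝ≥0∞) ^ n)⁻¹ := by
    intro n
    have hsub : E ⊆ ⋃ w ∈ T n, {j | ∀ t : Fin n, j t = w t} := by
      intro e he
      simp only [mem_iUnion]
      exact ⟨fun t => e t, Finset.mem_filter.2 ⟨Finset.mem_univ _, e, he, fun _ => rfl⟩,
        fun _ => rfl⟩
    refine (measure_mono hsub).trans ((measure_biUnion_finset_le _ _).trans ?_)
    simp [hν.2]
  have hbk : 0 < b ^ k := by positivity
  have hlim : ∀ m : ℕ, ν E ≤ (((b ^ k - 1 : ℕ) : ℝ≥0∞) / ((b ^ k : ℕ) : ℝ≥0∞)) ^ m := by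
    intro m
    refine (hmeas (m * k)).trans ?_
    rw [div_eq_mul_inv, mul_pow, ← ENNReal.inv_pow, Nat.cast_pow, ← pow_mul, mul_comm k m]
    gcongr
    exact_mod_cast hcard m
  have hr : ((b ^ k - 1 : ℕ) : ℝ≥0∞) / ((b ^ k : ℕ) : ℝ≥0∞) < 1 := by
    rw [ENNReal.div_lt_iff (Or.inl (by exact_mod_cast hbk.ne')) (Or.inl (ENNReal.natCast_ne_top _)),
      one_mul]
    exact_mod_cast Nat.sub_lt hbk one_pos
  exact hE (le_antisymm (ge_of_tendsto' (ENNReal.tendsto_pow_atTop_nhds_zero_of_lt_one hr) hlim)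
    zero_le)

/-- If a level set of `S(x, ·)` has positive measure, then some point of `[0,1]` has
`S`-oscillation `O(γ^k)`: by the cocycle identity and `exists_rich_word`, at `z = w(x)` the
function `S(z, ·)` takes one and the same value somewhere in each cylinder of length `k`. -/
theorem exists_small_osc {b : ℕ} {γ : ℝ} {φ : ℝ → ℝ} {C : ℝ} (hb : 2 ≤ b)
    (hγ : γ ∈ Ioo (0 : ℝ) 1) (hC : ∀ x, |φ x| ≤ C) (ν : Measure (ℕ → Fin b))
    (hν : IsBernoulli b ν) (x : ℝ) (hx : x ∈ Icc (0 : ℝ) 1) (y : ℝ)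
    (hE : ν {j | S b γ φ x j = y} ≠ 0) (k : ℕ) :
    ∃ z ∈ Icc (0 : ℝ) 1, ∀ i j : ℕ → Fin b,
      |S b γ φ z i - S b γ φ z j| ≤ γ ^ k * (4 * (C / (1 - γ))) := by
  obtain ⟨n, w, hw⟩ := exists_rich_word b hb ν hν _ hE k
  -- an extension of `w` to an infinite sequence, used only through its prefix `w`
  obtain ⟨e₀, -, he₀, -⟩ := hw fun _ => ⟨0, by omega⟩
  refine ⟨prePt b x e₀ n, prePt_mem b hb x hx e₀ n, fun i j => ?_⟩
  obtain ⟨e, he, hew, hei⟩ := hw fun t => i t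
  obtain ⟨f, hf, hfw, hfj⟩ := hw fun t => j t
  have hpre : ∀ g : ℕ → Fin b, (∀ t : Fin n, g t = w t) → ∀ t < n, g t = e₀ t :=
    fun g hg t ht => (hg ⟨t, ht⟩).trans (he₀ ⟨t, ht⟩).symm
  have hef : S b γ φ (prePt b x e₀ n) (shift n e) = S b γ φ (prePt b x e₀ n) (shift n f) := by
    have h1 := S_sub_of_agree hb hγ hC x e e₀ n (hpre e hew)
    have h2 := S_sub_of_agree hb hγ hC x f e₀ n (hpre f hfw)
    have he' : S b γ φ x e = y := he
    have hf' : S b γ φ x f = y := hf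
    rw [he'] at h1
    rw [hf'] at h2
    have h3 := mul_left_cancel₀ (pow_ne_zero n hγ.1.ne') (h1.symm.trans h2)
    linarith
  have h1 := abs_S_sub_le_of_agree hb hγ hC (prePt b x e₀ n) i (shift n e) k
    fun t ht => (hei ⟨t, ht⟩).symm
  have h2 := abs_S_sub_le_of_agree hb hγ hC (prePt b x e₀ n) (shift n f) j k
    fun t ht => hfj ⟨t, ht⟩
  rw [hef] at h1
  have h3 := abs_sub_le (S b γ φ (prePt b x e₀ n) i) (S b γ φ (prePt b x e₀ n) (shift n f))
    (S b γ φ (prePt b x e₀ n) j)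
  linarith

/-! ### Absence of atoms -/

/-- Under condition (H) the measure `m_x` has no atoms, for every `x ∈ [0,1]`. -/
theorem mMeas_no_atoms (b : ℕ) (hb : 2 ≤ b) (γ : ℝ) (hγ : γ ∈ Ioo (0 : ℝ) 1)
    (φ : ℝ → ℝ) (hper : ∀ x : ℝ, φ (x + 1) = φ x) (K : ℝ≥0) (hlip : LipschitzWith K φ)
    (hH : CondH b γ φ) (ν : Measure (ℕ → Fin b)) (hν : IsBernoulli b ν) :
    ∀ x ∈ Icc (0 : ℝ) 1, ∀ y : ℝ, mMeas b γ φ ν x {y} = 0 := by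
  intro x hx y
  obtain ⟨C, -, hC⟩ := exists_bound φ hper K hlip
  by_cases hm : AEMeasurable (S b γ φ x) ν
  swap
  · -- `Measure.map` is `0` by convention along a non-measurable map
    simp [mMeas, Measure.map_of_not_aemeasurable hm]
  rw [mMeas, Measure.map_apply_of_aemeasurable hm (measurableSet_singleton y)]
  by_contra hE
  choose z hz hosc using exists_small_osc hb hγ hC ν hν x hx y hE
  obtain ⟨d, hd, s, hs, hlim⟩ := isCompact_Icc.tendsto_subseq hz
  have hφ := hlip.continuous
  have hconst : ∀ i j : ℕ → Fin b, S b γ φ d i = S b γ φ d j := by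
    intro i j
    have h1 : Tendsto (fun k => |S b γ φ (z (s k)) i - S b γ φ (z (s k)) j|) atTop
        (𝓝 |S b γ φ d i - S b γ φ d j|) :=
      (((continuous_S hγ hC hφ i).tendsto d).comp hlim |>.sub
        (((continuous_S hγ hC hφ j).tendsto d).comp hlim)).abs
    have h2 : Tendsto (fun k => γ ^ s k * (4 * (C / (1 - γ)))) atTop (𝓝 0) := by
      have := ((tendsto_pow_atTop_nhds_zero_of_lt_one hγ.1.le hγ.2).comp
        hs.tendsto_atTop).mul_const (4 * (C / (1 - γ)))
      simpa using this
    have h3 := le_of_tendsto_of_tendsto' h1 h2 fun k => hosc (s k) i j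
    exact sub_eq_zero.1 (abs_nonpos_iff.1 h3)
  have hall := const_of_const_point hb hγ hC hφ d hd hconst
  have hne : (fun _ : ℕ => (⟨0, by omega⟩ : Fin b)) ≠ fun _ => ⟨1, by omega⟩ := by
    intro h
    simpa using congrFun h 0
  obtain ⟨t, ht, htne⟩ := hH _ _ hne
  exact htne (hall t ht _ _)

end
end Skew
end
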